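/- arXiv:1010.3010 — 7 statements merged into one kernel-verified Lean document; each statement's English description precedes it below -/
import Mathlib

section
/- Let ψ : ℝ³ → ℝ be a smooth solution of the vorticity equation ζ_t + ψ_x ζ_y − ψ_y ζ_x = 0, where ζ := ψ_xx + ψ_yy. Then for every ε ∈ ℝ the function ψ̃(t,x,y) := ψ(t, x cos(εt) + y sin(εt), −x sin(εt) + y cos(εt)) + (ε/2)(x² + y²) is also a smooth solution of the vorticity equation. -/
noncomputable section

/-- Partial derivative with respect to t. -/
def dT (f : ℝ × ℝ × ℝ → ℝ) (p : ℝ × ℝ × ℝ) : ℝ := fderiv ℝ f p (1, 0, 0)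
/-- Partial derivative with respect to x. -/
def dX (f : ℝ × ℝ × ℝ → ℝ) (p : ℝ × ℝ × ℝ) : ℝ := fderiv ℝ f p (0, 1, 0)
/-- Partial derivative with respect to y. -/
def dY (f : ℝ × ℝ × ℝ → ℝ) (p : ℝ × ℝ × ℝ) : ℝ := fderiv ℝ f p (0, 0, 1)

/-- The vorticity ζ := ψ_xx + ψ_yy. -/
def vort (ψ : ℝ × ℝ × ℝ → ℝ) : ℝ × ℝ × ℝ → ℝ := fun p => dX (dX ψ) p + dY (dY ψ) p

/-- ψ is a smooth solution of the vorticity equation ζ_t + ψ_x ζ_y − ψ_y ζ_x = 0. -/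
def IsVortSol (ψ : ℝ × ℝ × ℝ → ℝ) : Prop :=
  ContDiff ℝ (⊤ : ℕ∞) ψ ∧ ∀ p : ℝ × ℝ × ℝ,
    dT (vort ψ) p + dX ψ p * dY (vort ψ) p - dY ψ p * dX (vort ψ) p = 0

def rotM (ε : ℝ) (p : ℝ × ℝ × ℝ) : ℝ × ℝ × ℝ :=
  (p.1, p.2.1 * Real.cos (ε * p.1) + p.2.2 * Real.sin (ε * p.1),
         -p.2.1 * Real.sin (ε * p.1) + p.2.2 * Real.cos (ε * p.1))

lemma rotM_smooth (ε : ℝ) : ContDiff ℝ (⊤ : ℕ∞) (rotM ε) := by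
  unfold rotM; fun_prop

lemma fderiv_split (f : ℝ × ℝ × ℝ → ℝ) (q : ℝ × ℝ × ℝ) (a b c : ℝ) :
    fderiv ℝ f q (a, b, c) = a * dT f q + b * dX f q + c * dY f q := by
  have : ((a, b, c) : ℝ × ℝ × ℝ)
      = a • ((1, 0, 0) : ℝ × ℝ × ℝ) + b • ((0, 1, 0) : ℝ × ℝ × ℝ) + c • ((0, 0, 1) : ℝ × ℝ × ℝ) := by
    simp
  rw [this]
  simp only [map_add, map_smul, smul_eq_mul, dT, dX, dY]

lemma fderiv_rotM (ε : ℝ) (p : ℝ × ℝ × ℝ) (a b c : ℝ) :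
    fderiv ℝ (rotM ε) p (a, b, c) =
      (a, b * Real.cos (ε * p.1) + c * Real.sin (ε * p.1) + a * ε * (rotM ε p).2.2,
       -b * Real.sin (ε * p.1) + c * Real.cos (ε * p.1) - a * ε * (rotM ε p).2.1) := by
  have h1 : HasFDerivAt (fun p : ℝ × ℝ × ℝ => p.1) (ContinuousLinearMap.fst ℝ ℝ (ℝ × ℝ)) p :=
    hasFDerivAt_fst
  have h2 : HasFDerivAt (fun p : ℝ × ℝ × ℝ => p.2.1)
      ((ContinuousLinearMap.fst ℝ ℝ ℝ).comp (ContinuousLinearMap.snd ℝ ℝ (ℝ × ℝ))) p :=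
    hasFDerivAt_fst.comp p hasFDerivAt_snd
  have h3 : HasFDerivAt (fun p : ℝ × ℝ × ℝ => p.2.2)
      ((ContinuousLinearMap.snd ℝ ℝ ℝ).comp (ContinuousLinearMap.snd ℝ ℝ (ℝ × ℝ))) p :=
    hasFDerivAt_snd.comp p hasFDerivAt_snd
  have hc := (h1.const_mul ε).cos
  have hs := (h1.const_mul ε).sin
  have := h1.prodMk (((h2.mul hc).add (h3.mul hs)).prodMk ((h2.neg.mul hs).add (h3.mul hc)))
  have e : fderiv ℝ (rotM ε) p = _ := HasFDerivAt.fderiv this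
  rw [e]
  ext
  · simp
  · simp [rotM]; ring
  · simp [rotM]; ring

lemma fderiv_comp_rotM (ε : ℝ) (f : ℝ × ℝ × ℝ → ℝ) (hf : Differentiable ℝ f)
    (p v : ℝ × ℝ × ℝ) :
    fderiv ℝ (fun p => f (rotM ε p)) p v = fderiv ℝ f (rotM ε p) (fderiv ℝ (rotM ε) p v) := by
  have := fderiv_comp p (hf (rotM ε p)) (((rotM_smooth ε).differentiable (by simp)) p)
  change fderiv ℝ (f ∘ rotM ε) p v = _
  rw [this]; rfl

lemma dT_comp (ε : ℝ) (f : ℝ × ℝ × ℝ → ℝ) (hf : Differentiable ℝ f) (p : ℝ × ℝ × ℝ) :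
    dT (fun p => f (rotM ε p)) p = dT f (rotM ε p) + ε * (rotM ε p).2.2 * dX f (rotM ε p)
      - ε * (rotM ε p).2.1 * dY f (rotM ε p) := by
  rw [dT, fderiv_comp_rotM ε f hf, fderiv_rotM, fderiv_split]; ring

lemma dX_comp (ε : ℝ) (f : ℝ × ℝ × ℝ → ℝ) (hf : Differentiable ℝ f) (p : ℝ × ℝ × ℝ) :
    dX (fun p => f (rotM ε p)) p = Real.cos (ε * p.1) * dX f (rotM ε p)
      - Real.sin (ε * p.1) * dY f (rotM ε p) := by
  rw [dX, fderiv_comp_rotM ε f hf, fderiv_rotM, fderiv_split]; ring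

lemma dY_comp (ε : ℝ) (f : ℝ × ℝ × ℝ → ℝ) (hf : Differentiable ℝ f) (p : ℝ × ℝ × ℝ) :
    dY (fun p => f (rotM ε p)) p = Real.sin (ε * p.1) * dX f (rotM ε p)
      + Real.cos (ε * p.1) * dY f (rotM ε p) := by
  rw [dY, fderiv_comp_rotM ε f hf, fderiv_rotM, fderiv_split]; ring

lemma dir_smooth {f : ℝ × ℝ × ℝ → ℝ} (hf : ContDiff ℝ (⊤ : ℕ∞) f) (v : ℝ × ℝ × ℝ) :
    ContDiff ℝ (⊤ : ℕ∞) (fun p => fderiv ℝ f p v) :=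
  (hf.fderiv_right (m := (⊤ : ℕ∞)) (by simp)).clm_apply contDiff_const

lemma dX_smooth {f : ℝ × ℝ × ℝ → ℝ} (hf : ContDiff ℝ (⊤ : ℕ∞) f) :
    ContDiff ℝ (⊤ : ℕ∞) (dX f) := dir_smooth hf _

lemma dY_smooth {f : ℝ × ℝ × ℝ → ℝ} (hf : ContDiff ℝ (⊤ : ℕ∞) f) :
    ContDiff ℝ (⊤ : ℕ∞) (dY f) := dir_smooth hf _

lemma sm_diff {f : ℝ × ℝ × ℝ → ℝ} (hf : ContDiff ℝ (⊤ : ℕ∞) f) : Differentiable ℝ f :=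
  hf.differentiable (by simp)

/-- derivative of a product with a function of t, in a direction tangent to t = const -/
lemma fderiv_tmul (g : ℝ → ℝ) (hg : Differentiable ℝ g) (f : ℝ × ℝ × ℝ → ℝ)
    (hf : Differentiable ℝ f) (p : ℝ × ℝ × ℝ) (b c : ℝ) :
    fderiv ℝ (fun p => g p.1 * f p) p (0, b, c) = g p.1 * fderiv ℝ f p (0, b, c) := by
  have h1 : HasFDerivAt (fun p : ℝ × ℝ × ℝ => p.1) (ContinuousLinearMap.fst ℝ ℝ (ℝ × ℝ)) p :=
    hasFDerivAt_fst
  have h2 : HasFDerivAt (fun p : ℝ × ℝ × ℝ => g p.1) _ p :=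
    (hg p.1).hasDerivAt.hasFDerivAt.comp p h1
  have e := (h2.mul (hf p).hasFDerivAt).fderiv
  change fderiv ℝ (fun p => g p.1 * f p) p = _ at e
  rw [e]
  simp

lemma fderiv_lin (a b c : ℝ) (p v : ℝ × ℝ × ℝ) :
    fderiv ℝ (fun p : ℝ × ℝ × ℝ => a * p.2.1 + b * p.2.2 + c) p v = a * v.2.1 + b * v.2.2 := by
  have h2 : HasFDerivAt (fun p : ℝ × ℝ × ℝ => p.2.1)
      ((ContinuousLinearMap.fst ℝ ℝ ℝ).comp (ContinuousLinearMap.snd ℝ ℝ (ℝ × ℝ))) p :=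
    hasFDerivAt_fst.comp p hasFDerivAt_snd
  have h3 : HasFDerivAt (fun p : ℝ × ℝ × ℝ => p.2.2)
      ((ContinuousLinearMap.snd ℝ ℝ ℝ).comp (ContinuousLinearMap.snd ℝ ℝ (ℝ × ℝ))) p :=
    hasFDerivAt_snd.comp p hasFDerivAt_snd
  have e := (((h2.const_mul a).add (h3.const_mul b)).add_const c).fderiv
  change fderiv ℝ (fun p : ℝ × ℝ × ℝ => a * p.2.1 + b * p.2.2 + c) p = _ at e
  rw [e]; simp

lemma fderiv_quad (ε : ℝ) (p v : ℝ × ℝ × ℝ) :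
    fderiv ℝ (fun p : ℝ × ℝ × ℝ => ε / 2 * (p.2.1 ^ 2 + p.2.2 ^ 2)) p v
      = ε * (p.2.1 * v.2.1 + p.2.2 * v.2.2) := by
  have h2 : HasFDerivAt (fun p : ℝ × ℝ × ℝ => p.2.1)
      ((ContinuousLinearMap.fst ℝ ℝ ℝ).comp (ContinuousLinearMap.snd ℝ ℝ (ℝ × ℝ))) p :=
    hasFDerivAt_fst.comp p hasFDerivAt_snd
  have h3 : HasFDerivAt (fun p : ℝ × ℝ × ℝ => p.2.2)
      ((ContinuousLinearMap.snd ℝ ℝ ℝ).comp (ContinuousLinearMap.snd ℝ ℝ (ℝ × ℝ))) p :=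
    hasFDerivAt_snd.comp p hasFDerivAt_snd
  have e := (((h2.pow 2).add (h3.pow 2)).const_mul (ε / 2)).fderiv
  change fderiv ℝ (fun p : ℝ × ℝ × ℝ => ε / 2 * (p.2.1 ^ 2 + p.2.2 ^ 2)) p = _ at e
  rw [e]; simp; ring

lemma fderiv_add3 (f g k : ℝ × ℝ × ℝ → ℝ) (hf : Differentiable ℝ f) (hg : Differentiable ℝ g)
    (hk : Differentiable ℝ k) (p v : ℝ × ℝ × ℝ) :
    fderiv ℝ (fun p => f p + g p + k p) p v
      = fderiv ℝ f p v + fderiv ℝ g p v + fderiv ℝ k p v := by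
  have e := (((hf p).hasFDerivAt.add (hg p).hasFDerivAt).add (hk p).hasFDerivAt).fderiv
  change fderiv ℝ (fun p => f p + g p + k p) p = _ at e
  rw [e]; simp

theorem Jt_symmetry_of_vorticity_equation
    (ψ : ℝ × ℝ × ℝ → ℝ) (h : IsVortSol ψ) (ε : ℝ) :
    IsVortSol (fun p =>
      ψ (p.1, p.2.1 * Real.cos (ε * p.1) + p.2.2 * Real.sin (ε * p.1),
         -p.2.1 * Real.sin (ε * p.1) + p.2.2 * Real.cos (ε * p.1))
      + ε / 2 * (p.2.1 ^ 2 + p.2.2 ^ 2)) := by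
  obtain ⟨hs, heq⟩ := h
  have hq : ContDiff ℝ (⊤ : ℕ∞) (fun p : ℝ × ℝ × ℝ => ε / 2 * (p.2.1 ^ 2 + p.2.2 ^ 2)) := by
    fun_prop
  have hR : ∀ {f : ℝ × ℝ × ℝ → ℝ}, ContDiff ℝ (⊤ : ℕ∞) f →
      ContDiff ℝ (⊤ : ℕ∞) (fun p => f (rotM ε p)) := fun hf => hf.comp (rotM_smooth ε)
  change IsVortSol (fun p => ψ (rotM ε p) + ε / 2 * (p.2.1 ^ 2 + p.2.2 ^ 2))
  set Ψ : ℝ × ℝ × ℝ → ℝ := fun p => ψ (rotM ε p) + ε / 2 * (p.2.1 ^ 2 + p.2.2 ^ 2) with hΨ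
  have hadd : ∀ p v, fderiv ℝ Ψ p v = fderiv ℝ (fun p => ψ (rotM ε p)) p v
      + ε * (p.2.1 * v.2.1 + p.2.2 * v.2.2) := by
    intro p v
    rw [← fderiv_quad, hΨ, fderiv_fun_add (sm_diff (hR hs) p) (sm_diff hq p)]; rfl
  have hcos : Differentiable ℝ (fun t : ℝ => Real.cos (ε * t)) := by fun_prop
  have hsin : Differentiable ℝ (fun t : ℝ => Real.sin (ε * t)) := by fun_prop
  have hnsin : Differentiable ℝ (fun t : ℝ => -Real.sin (ε * t)) := by fun_prop
  have hx : dX Ψ = fun p => Real.cos (ε * p.1) * dX ψ (rotM ε p)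
      + -Real.sin (ε * p.1) * dY ψ (rotM ε p) + (ε * p.2.1 + 0 * p.2.2 + 0) := by
    funext p
    rw [dX, hadd]
    change dX (fun p => ψ (rotM ε p)) p + _ = _
    rw [dX_comp ε ψ (sm_diff hs)]; simp; ring
  have hy : dY Ψ = fun p => Real.sin (ε * p.1) * dX ψ (rotM ε p)
      + Real.cos (ε * p.1) * dY ψ (rotM ε p) + (0 * p.2.1 + ε * p.2.2 + 0) := by
    funext p
    rw [dY, hadd]
    change dY (fun p => ψ (rotM ε p)) p + _ = _
    rw [dY_comp ε ψ (sm_diff hs)]; simp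
  have sX := dX_smooth hs
  have sY := dY_smooth hs
  have dXR := sm_diff (hR sX)
  have dYR := sm_diff (hR sY)
  have cs : ∀ p : ℝ × ℝ × ℝ, Real.sin (ε * p.1) ^ 2 + Real.cos (ε * p.1) ^ 2 = 1 :=
    fun p => Real.sin_sq_add_cos_sq _
  have hv : vort Ψ = fun p => vort ψ (rotM ε p) + 2 * ε := by
    funext p
    have e1 : dX (dX Ψ) p = Real.cos (ε * p.1) * dX (fun p => dX ψ (rotM ε p)) p
        + -Real.sin (ε * p.1) * dX (fun p => dY ψ (rotM ε p)) p + ε := by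
      rw [hx, dX, fderiv_add3 _ _ _ (by fun_prop) (by fun_prop) (by fun_prop), fderiv_lin,
        fderiv_tmul _ hcos _ dXR, fderiv_tmul _ hnsin _ dYR]
      simp [dX]
    have e2 : dY (dY Ψ) p = Real.sin (ε * p.1) * dY (fun p => dX ψ (rotM ε p)) p
        + Real.cos (ε * p.1) * dY (fun p => dY ψ (rotM ε p)) p + ε := by
      rw [hy, dY, fderiv_add3 _ _ _ (by fun_prop) (by fun_prop) (by fun_prop), fderiv_lin,
        fderiv_tmul _ hsin _ dXR, fderiv_tmul _ hcos _ dYR]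
      simp [dY]
    rw [vort, e1, e2, dX_comp ε _ (sm_diff sX), dX_comp ε _ (sm_diff sY),
      dY_comp ε _ (sm_diff sX), dY_comp ε _ (sm_diff sY), vort]
    linear_combination (dX (dX ψ) (rotM ε p) + dY (dY ψ) (rotM ε p)) * cs p
  have sv : ContDiff ℝ (⊤ : ℕ∞) (vort ψ) := (dX_smooth sX).add (dY_smooth sY)
  refine ⟨(hR hs).add hq, fun p => ?_⟩
  have hd : ∀ v, fderiv ℝ (vort Ψ) p v = fderiv ℝ (fun p => vort ψ (rotM ε p)) p v := by
    intro v
    rw [hv, fderiv_add_const]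
  have t1 : dT (vort Ψ) p = dT (fun p => vort ψ (rotM ε p)) p := hd _
  have t2 : dX (vort Ψ) p = dX (fun p => vort ψ (rotM ε p)) p := hd _
  have t3 : dY (vort Ψ) p = dY (fun p => vort ψ (rotM ε p)) p := hd _
  rw [t1, t2, t3, dT_comp ε _ (sm_diff sv), dX_comp ε _ (sm_diff sv), dY_comp ε _ (sm_diff sv),
    hx, hy]
  have h0 := heq (rotM ε p)
  have r1 : (rotM ε p).2.1 = p.2.1 * Real.cos (ε * p.1) + p.2.2 * Real.sin (ε * p.1) := rfl
  have r2 : (rotM ε p).2.2 = -p.2.1 * Real.sin (ε * p.1) + p.2.2 * Real.cos (ε * p.1) := rfl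
  rw [r1, r2]
  linear_combination h0 + (dX ψ (rotM ε p) * dY (vort ψ) (rotM ε p)
    - dY ψ (rotM ε p) * dX (vort ψ) (rotM ε p)) * cs p
end
end

section
/- Let ψ : ℝ³ → ℝ be a smooth solution of the vorticity equation ζ_t + ψ_x ζ_y − ψ_y ζ_x = 0, where ζ := ψ_xx + ψ_yy, and let γ¹, γ² : ℝ → ℝ be arbitrary smooth functions. Then the function ψ̃(t,x,y) := ψ(t, x − γ¹(t), y − γ²(t)) − γ¹'(t)·y + γ²'(t)·x is also a smooth solution of the vorticity equation. -/
noncomputable section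

theorem galAux_fd (F : ℝ × ℝ × ℝ → ℝ) (hF : Differentiable ℝ F) (g1 g2 a b c : ℝ → ℝ)
    (h1 : Differentiable ℝ g1) (h2 : Differentiable ℝ g2) (ha : Differentiable ℝ a)
    (hb : Differentiable ℝ b) (hc : Differentiable ℝ c) (p v : ℝ × ℝ × ℝ) :
    fderiv ℝ (fun p : ℝ × ℝ × ℝ => F (p.1, p.2.1 - g1 p.1, p.2.2 - g2 p.1)
      - a p.1 * p.2.2 + b p.1 * p.2.1 + c p.1) p v
    = fderiv ℝ F (p.1, p.2.1 - g1 p.1, p.2.2 - g2 p.1)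
        (v.1, v.2.1 - deriv g1 p.1 * v.1, v.2.2 - deriv g2 p.1 * v.1)
      - (a p.1 * v.2.2 + deriv a p.1 * v.1 * p.2.2)
      + (b p.1 * v.2.1 + deriv b p.1 * v.1 * p.2.1) + deriv c p.1 * v.1 := by
  have e1 : HasFDerivAt (fun p : ℝ × ℝ × ℝ => p.1) (ContinuousLinearMap.fst ℝ ℝ (ℝ × ℝ)) p :=
    hasFDerivAt_fst
  have e2 : HasFDerivAt (fun p : ℝ × ℝ × ℝ => p.2.1)
      ((ContinuousLinearMap.fst ℝ ℝ ℝ).comp (ContinuousLinearMap.snd ℝ ℝ (ℝ × ℝ))) p :=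
    ((ContinuousLinearMap.fst ℝ ℝ ℝ).comp (ContinuousLinearMap.snd ℝ ℝ (ℝ × ℝ))).hasFDerivAt
  have e3 : HasFDerivAt (fun p : ℝ × ℝ × ℝ => p.2.2)
      ((ContinuousLinearMap.snd ℝ ℝ ℝ).comp (ContinuousLinearMap.snd ℝ ℝ (ℝ × ℝ))) p :=
    ((ContinuousLinearMap.snd ℝ ℝ ℝ).comp (ContinuousLinearMap.snd ℝ ℝ (ℝ × ℝ))).hasFDerivAt
  have k : ∀ g : ℝ → ℝ, Differentiable ℝ g → HasFDerivAt (fun p : ℝ × ℝ × ℝ => g p.1)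
      (deriv g p.1 • ContinuousLinearMap.fst ℝ ℝ (ℝ × ℝ)) p := fun g hg =>
    (hg p.1).hasDerivAt.comp_hasFDerivAt p e1
  have hΦ := e1.prodMk ((e2.sub (k g1 h1)).prodMk (e3.sub (k g2 h2)))
  have hFΦ := HasFDerivAt.comp (g := F) p (hF _).hasFDerivAt hΦ
  have key := ((hFΦ.sub ((k a ha).mul e3)).add ((k b hb).mul e2)).add (k c hc)
  have key2 : HasFDerivAt (fun p : ℝ × ℝ × ℝ => F (p.1, p.2.1 - g1 p.1, p.2.2 - g2 p.1)
      - a p.1 * p.2.2 + b p.1 * p.2.1 + c p.1) _ p := key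
  rw [key2.fderiv]
  simp
  ring

theorem galAux_smooth (F : ℝ × ℝ × ℝ → ℝ) (hF : ContDiff ℝ (⊤ : ℕ∞) F) (v : ℝ × ℝ × ℝ) :
    ContDiff ℝ (⊤ : ℕ∞) (fun p => fderiv ℝ F p v) :=
  (hF.fderiv_right (m := (⊤ : ℕ∞)) (by simp)).clm_apply contDiff_const

theorem generalized_Galilean_symmetry_of_vorticity_equation
    (ψ : ℝ × ℝ × ℝ → ℝ) (h : IsVortSol ψ)
    (γ1 γ2 : ℝ → ℝ) (hγ1 : ContDiff ℝ (⊤ : ℕ∞) γ1) (hγ2 : ContDiff ℝ (⊤ : ℕ∞) γ2) :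
    IsVortSol (fun p =>
      ψ (p.1, p.2.1 - γ1 p.1, p.2.2 - γ2 p.1)
      - deriv γ1 p.1 * p.2.2 + deriv γ2 p.1 * p.2.1) := by
  obtain ⟨hs, heq⟩ := h
  have tn : ((⊤ : ℕ∞) : WithTop ℕ∞) ≠ 0 := by simp
  have d1 : ContDiff ℝ (⊤ : ℕ∞) (deriv γ1) := (contDiff_infty_iff_deriv.1 hγ1).2
  have d2 : ContDiff ℝ (⊤ : ℕ∞) (deriv γ2) := (contDiff_infty_iff_deriv.1 hγ2).2
  have D1 := hγ1.differentiable tn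
  have D2 := hγ2.differentiable tn
  have sX : ContDiff ℝ (⊤ : ℕ∞) (dX ψ) := galAux_smooth ψ hs _
  have sY : ContDiff ℝ (⊤ : ℕ∞) (dY ψ) := galAux_smooth ψ hs _
  have sV : ContDiff ℝ (⊤ : ℕ∞) (vort ψ) :=
    (galAux_smooth _ sX _).add (galAux_smooth _ sY _)
  have z : Differentiable ℝ (fun _ : ℝ => (0 : ℝ)) := differentiable_const _
  refine ⟨?_, ?_⟩
  · fun_prop
  set G : ℝ × ℝ × ℝ → ℝ := fun p => ψ (p.1, p.2.1 - γ1 p.1, p.2.2 - γ2 p.1)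
      - deriv γ1 p.1 * p.2.2 + deriv γ2 p.1 * p.2.1 with hG
  have fG := galAux_fd ψ (hs.differentiable tn) γ1 γ2 (deriv γ1) (deriv γ2) (fun _ => 0) D1 D2
    (d1.differentiable tn) (d2.differentiable tn) z
  simp only [add_zero] at fG
  have gX : dX G = fun p => dX ψ (p.1, p.2.1 - γ1 p.1, p.2.2 - γ2 p.1) + deriv γ2 p.1 := by
    funext p
    simp only [dX, hG, fG]
    simp
  have gY : dY G = fun p => dY ψ (p.1, p.2.1 - γ1 p.1, p.2.2 - γ2 p.1) + -deriv γ1 p.1 := by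
    funext p
    simp only [dY, hG, fG]
    simp
    try ring
  have fX := galAux_fd (dX ψ) (sX.differentiable tn) γ1 γ2 (fun _ => 0) (fun _ => 0) (deriv γ2)
    D1 D2 z z (d2.differentiable tn)
  have fY := galAux_fd (dY ψ) (sY.differentiable tn) γ1 γ2 (fun _ => 0) (fun _ => 0)
    (fun t => -deriv γ1 t) D1 D2 z z (d1.differentiable tn).neg
  have fV := galAux_fd (vort ψ) (sV.differentiable tn) γ1 γ2 (fun _ => 0) (fun _ => 0)
    (fun _ => 0) D1 D2 z z z
  simp only [zero_mul, sub_zero, add_zero] at fX fY fV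
  have gV : vort G = fun p => vort ψ (p.1, p.2.1 - γ1 p.1, p.2.2 - γ2 p.1) := by
    funext p
    simp only [vort]
    rw [gX, gY]
    rw [dX, dY, fX, fY]
    simp [dX, dY]
  intro p
  have hp := heq (p.1, p.2.1 - γ1 p.1, p.2.2 - γ2 p.1)
  rw [gV, gX, gY]
  have split : ∀ L : ℝ × ℝ × ℝ →L[ℝ] ℝ, ∀ u w : ℝ,
      L (1, -u, -w) = L (1, 0, 0) - u * L (0, 1, 0) - w * L (0, 0, 1) := by
    intro L u w
    have : ((1, -u, -w) : ℝ × ℝ × ℝ) = (1, 0, 0) - u • (0, 1, 0) - w • (0, 0, 1) := by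
      simp
    rw [this]
    simp only [map_sub, map_smul, smul_eq_mul]
  have vT : dT (fun p => vort ψ (p.1, p.2.1 - γ1 p.1, p.2.2 - γ2 p.1)) p
      = dT (vort ψ) (p.1, p.2.1 - γ1 p.1, p.2.2 - γ2 p.1)
        - deriv γ1 p.1 * dX (vort ψ) (p.1, p.2.1 - γ1 p.1, p.2.2 - γ2 p.1)
        - deriv γ2 p.1 * dY (vort ψ) (p.1, p.2.1 - γ1 p.1, p.2.2 - γ2 p.1) := by
    rw [dT, fV]
    simp [dT, dX, dY, split]
  have vX : dX (fun p => vort ψ (p.1, p.2.1 - γ1 p.1, p.2.2 - γ2 p.1)) p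
      = dX (vort ψ) (p.1, p.2.1 - γ1 p.1, p.2.2 - γ2 p.1) := by
    rw [dX, fV]
    simp [dX]
  have vY : dY (fun p => vort ψ (p.1, p.2.1 - γ1 p.1, p.2.2 - γ2 p.1)) p
      = dY (vort ψ) (p.1, p.2.1 - γ1 p.1, p.2.2 - γ2 p.1) := by
    rw [dY, fV]
    simp [dY]
  rw [vT, vX, vY]
  linear_combination hp
end
end

section
/- Let U ⊆ ℝ² be open and connected and let Z¹, Z² : U → ℝ be smooth functions such that at every point of U the gradients satisfy Z¹_x Z²_x + Z¹_y Z²_y = 0 and (Z¹_x)² + (Z¹_y)² = (Z²_x)² + (Z²_y)² ≠ 0. Then there exists ε ∈ {1, −1} such that Z¹_x = ε Z²_y and Z¹_y = −ε Z²_x hold at every point of U. -/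
noncomputable section

/-- Partial derivative with respect to the first variable. -/
def d1 (f : ℝ × ℝ → ℝ) (p : ℝ × ℝ) : ℝ := fderiv ℝ f p (1, 0)
/-- Partial derivative with respect to the second variable. -/
def d2 (f : ℝ × ℝ → ℝ) (p : ℝ × ℝ) : ℝ := fderiv ℝ f p (0, 1)

theorem orthogonal_equinorm_gradients_give_Cauchy_Riemann
    (U : Set (ℝ × ℝ)) (hUopen : IsOpen U) (hUconn : IsConnected U)
    (Z1 Z2 : ℝ × ℝ → ℝ) (hZ1 : ContDiffOn ℝ (⊤ : ℕ∞) Z1 U) (hZ2 : ContDiffOn ℝ (⊤ : ℕ∞) Z2 U)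
    (horth : ∀ p ∈ U, d1 Z1 p * d1 Z2 p + d2 Z1 p * d2 Z2 p = 0)
    (hnorm : ∀ p ∈ U, (d1 Z1 p) ^ 2 + (d2 Z1 p) ^ 2 = (d1 Z2 p) ^ 2 + (d2 Z2 p) ^ 2)
    (hne : ∀ p ∈ U, (d1 Z1 p) ^ 2 + (d2 Z1 p) ^ 2 ≠ 0) :
    ∃ ε : ℝ, (ε = 1 ∨ ε = -1) ∧
      ∀ p ∈ U, d1 Z1 p = ε * d2 Z2 p ∧ d2 Z1 p = -ε * d1 Z2 p := by
  have hc1 : ContinuousOn (fun p => fderiv ℝ Z1 p) U :=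
    hZ1.continuousOn_fderiv_of_isOpen hUopen (by exact_mod_cast le_top)
  have hc2 : ContinuousOn (fun p => fderiv ℝ Z2 p) U :=
    hZ2.continuousOn_fderiv_of_isOpen hUopen (by exact_mod_cast le_top)
  have hJ : ContinuousOn (fun p => d1 Z1 p * d2 Z2 p - d2 Z1 p * d1 Z2 p) U := by
    unfold d1 d2
    exact ((hc1.clm_apply continuousOn_const).mul (hc2.clm_apply continuousOn_const)).sub
      ((hc1.clm_apply continuousOn_const).mul (hc2.clm_apply continuousOn_const))
  have hsq : ∀ p ∈ U, (d1 Z1 p * d2 Z2 p - d2 Z1 p * d1 Z2 p) ^ 2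
      = ((d1 Z1 p) ^ 2 + (d2 Z1 p) ^ 2) ^ 2 := by
    intro p hp
    have h1 := horth p hp
    have h2 := hnorm p hp
    linear_combination (-(d1 Z1 p * d1 Z2 p + d2 Z1 p * d2 Z2 p)) * h1
      - ((d1 Z1 p) ^ 2 + (d2 Z1 p) ^ 2) * h2
  have hJne : ∀ p ∈ U, d1 Z1 p * d2 Z2 p - d2 Z1 p * d1 Z2 p ≠ 0 := by
    intro p hp h0
    have h := hsq p hp
    rw [h0] at h
    exact hne p hp (pow_eq_zero_iff (two_ne_zero) |>.1 (by linarith))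
  by_cases hpos : ∀ p ∈ U, 0 < d1 Z1 p * d2 Z2 p - d2 Z1 p * d1 Z2 p
  · refine ⟨1, Or.inl rfl, fun p hp => ?_⟩
    have hL : d1 Z1 p * d2 Z2 p - d2 Z1 p * d1 Z2 p = (d1 Z1 p) ^ 2 + (d2 Z1 p) ^ 2 :=
      (pow_left_inj₀ (hpos p hp).le (by positivity) two_ne_zero).1 (hsq p hp)
    have h2 := hnorm p hp
    have h3 : (d1 Z1 p - d2 Z2 p) ^ 2 + (d2 Z1 p + d1 Z2 p) ^ 2 = 0 := by
      linear_combination (-2) * hL - h2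
    constructor
    · have : d1 Z1 p - d2 Z2 p = 0 := by
        apply (pow_eq_zero_iff two_ne_zero).1
        nlinarith [sq_nonneg (d1 Z1 p - d2 Z2 p), sq_nonneg (d2 Z1 p + d1 Z2 p)]
      linarith
    · have : d2 Z1 p + d1 Z2 p = 0 := by
        apply (pow_eq_zero_iff two_ne_zero).1
        nlinarith [sq_nonneg (d1 Z1 p - d2 Z2 p), sq_nonneg (d2 Z1 p + d1 Z2 p)]
      linarith
  · push Not at hpos
    obtain ⟨q, hq, hq0⟩ := hpos
    have hneg : ∀ p ∈ U, d1 Z1 p * d2 Z2 p - d2 Z1 p * d1 Z2 p < 0 := by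
      intro p hp
      by_contra hcon
      obtain ⟨r, hr, hr0⟩ := hUconn.isPreconnected.intermediate_value hq hp hJ
        ⟨hq0, not_lt.1 hcon⟩
      exact hJne r hr hr0
    refine ⟨-1, Or.inr rfl, fun p hp => ?_⟩
    have hL : -(d1 Z1 p * d2 Z2 p - d2 Z1 p * d1 Z2 p) = (d1 Z1 p) ^ 2 + (d2 Z1 p) ^ 2 :=
      (pow_left_inj₀ (by linarith [hneg p hp]) (by positivity) two_ne_zero).1
        (by rw [neg_sq]; exact hsq p hp)
    have h2 := hnorm p hp
    have h3 : (d1 Z1 p + d2 Z2 p) ^ 2 + (d2 Z1 p - d1 Z2 p) ^ 2 = 0 := by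
      linear_combination (-2) * hL - h2
    constructor
    · have : d1 Z1 p + d2 Z2 p = 0 := by
        apply (pow_eq_zero_iff two_ne_zero).1
        nlinarith [sq_nonneg (d1 Z1 p + d2 Z2 p), sq_nonneg (d2 Z1 p - d1 Z2 p)]
      linarith
    · have : d2 Z1 p - d1 Z2 p = 0 := by
        apply (pow_eq_zero_iff two_ne_zero).1
        nlinarith [sq_nonneg (d1 Z1 p + d2 Z2 p), sq_nonneg (d2 Z1 p - d1 Z2 p)]
      linarith
end
end

section
/- Let f¹, f² : ℝ⁶ → ℝ be smooth functions of the variables (t, x, y, ζ, ζ₁, ζ₂) satisfying the system f¹_{ζζ₁} = 0, f²_{ζζ₂} = 0, f¹_{ζζ₂} + f²_{ζζ₁} = 0, and f¹_{ζx} + f²_{ζy} + f¹_{ζζ}·ζ₁ + f²_{ζζ}·ζ₂ = 0. Then there exist a smooth function Ψ = Ψ(t,x,y,ζ) and smooth functions f̃¹, f̃² = f̃^i(t,x,y,ζ₁,ζ₂) such that f¹ = Ψ_y + Ψ_ζ·ζ₂ + f̃¹ and f² = −Ψ_x − Ψ_ζ·ζ₁ + f̃². -/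
/-!
Statement 8: representation lemma for divergence expressions: smooth f¹, f² of
(t, x, y, ζ, ζ₁, ζ₂) satisfying the stated system can be written as
f¹ = Ψ_y + Ψ_ζ·ζ₂ + f̃¹, f² = −Ψ_x − Ψ_ζ·ζ₁ + f̃², with Ψ = Ψ(t,x,y,ζ) and
f̃^i = f̃^i(t,x,y,ζ₁,ζ₂).
-/

noncomputable section

abbrev V6 := ℝ × ℝ × ℝ × ℝ × ℝ × ℝ
abbrev V5 := ℝ × ℝ × ℝ × ℝ × ℝ
abbrev V4 := ℝ × ℝ × ℝ × ℝ

/-- Directional (partial) derivative on ℝ⁶. -/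
def pd6 (v : V6) (f : V6 → ℝ) (p : V6) : ℝ := fderiv ℝ f p v
/-- Directional (partial) derivative on ℝ⁴. -/
def pd4 (v : V4) (f : V4 → ℝ) (p : V4) : ℝ := fderiv ℝ f p v


open MeasureTheory Set Filter Topology

theorem drl_int_aux (n : ℕ) : ∀ (G : Type) [NormedAddCommGroup G] [NormedSpace ℝ G]
    [CompleteSpace G] (F : V4 × ℝ → G), ContDiff ℝ (⊤ : ℕ∞) F →
    ContDiff ℝ n (fun p => ∫ u in (0:ℝ)..1, F (p, u)) := by
  induction n with
  | zero =>
    intro G _ _ _ F hF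
    have hc : Continuous F := hF.continuous
    rw [Nat.cast_zero, contDiff_zero]
    exact intervalIntegral.continuous_parametric_intervalIntegral_of_continuous'
      (f := fun p u => F (p, u)) (by simpa [Function.uncurry_def] using hc) 0 1
  | succ n ih =>
    intro G _ _ _ F hF
    have hc : Continuous F := hF.continuous
    let F' : V4 × ℝ → (V4 →L[ℝ] G) :=
      fun q => (fderiv ℝ F q).comp (ContinuousLinearMap.inl ℝ V4 ℝ)
    have hF' : ContDiff ℝ (⊤ : ℕ∞) F' := by
      have h : ContDiff ℝ (⊤ : ℕ∞) (fderiv ℝ F) := hF.fderiv_right (by simp)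
      exact h.clm_comp contDiff_const
    have hF'c : Continuous F' := hF'.continuous
    push_cast
    rw [contDiff_succ_iff_hasFDerivAt]
    refine ⟨fun p => ∫ u in (0:ℝ)..1, F' (p, u), ih _ F' hF', fun p => ?_⟩
    have hK : IsCompact (Metric.closedBall p 1 ×ˢ Icc (0:ℝ) 1) :=
      (isCompact_closedBall p 1).prod isCompact_Icc
    obtain ⟨M, hM⟩ := hK.exists_bound_of_continuousOn hF'c.continuousOn
    refine intervalIntegral.hasFDerivAt_integral_of_dominated_of_fderiv_le
      (F := fun p u => F (p, u)) (F' := fun p u => F' (p, u)) (bound := fun _ => M)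
      (Metric.closedBall_mem_nhds p one_pos) ?_ ?_ ?_ ?_ ?_ ?_
    · refine Eventually.of_forall fun x => ?_
      have : Continuous fun u : ℝ => F (x, u) := by fun_prop
      exact this.aestronglyMeasurable
    · have : Continuous fun u : ℝ => F (p, u) := by fun_prop
      exact this.intervalIntegrable _ _
    · have : Continuous fun u : ℝ => F' (p, u) := by fun_prop
      exact this.aestronglyMeasurable
    · refine Eventually.of_forall fun u hu x hx => hM (x, u) ⟨hx, ?_⟩
      rw [uIoc_of_le zero_le_one] at hu
      exact ⟨hu.1.le, hu.2⟩
    · exact intervalIntegrable_const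
    · refine Eventually.of_forall fun u hu x hx => ?_
      have h1 : HasFDerivAt F (fderiv ℝ F (x, u)) (x, u) :=
        (hF.differentiable (by simp) _).hasFDerivAt
      exact h1.comp x (hasFDerivAt_prodMk_left x u)

theorem drl_int (F : V4 × ℝ → ℝ) (hF : ContDiff ℝ (⊤ : ℕ∞) F) :
    ContDiff ℝ (⊤ : ℕ∞) (fun p => ∫ u in (0:ℝ)..1, F (p, u)) := by
  rw [contDiff_infty]
  exact fun n => drl_int_aux n ℝ F hF

section gen
variable {E : Type} [NormedAddCommGroup E] [NormedSpace ℝ E]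

theorem drl_line {f : E → ℝ} (hf : ContDiff ℝ (⊤ : ℕ∞) f) (v p : E) (s : ℝ) :
    HasDerivAt (fun s : ℝ => f (p + s • v)) (fderiv ℝ f (p + s • v) v) s := by
  have h1 : HasFDerivAt f (fderiv ℝ f (p + s • v)) (p + s • v) :=
    (hf.differentiable (by simp) _).hasFDerivAt
  have h2 : HasDerivAt (fun s : ℝ => p + s • v) v s := by
    simpa using ((hasDerivAt_id s).smul_const v).const_add p
  exact h1.comp_hasDerivAt s h2

theorem drl_const {f : E → ℝ} (hf : ContDiff ℝ (⊤ : ℕ∞) f) (v : E)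
    (h : ∀ p, fderiv ℝ f p v = 0) (p : E) (s : ℝ) : f (p + s • v) = f p := by
  have := is_const_of_deriv_eq_zero (f := fun s : ℝ => f (p + s • v))
    (fun s => (drl_line hf v p s).differentiableAt)
    (fun s => by rw [(drl_line hf v p s).deriv, h]) s 0
  simpa using this

theorem drl_smooth {f : E → ℝ} (hf : ContDiff ℝ (⊤ : ℕ∞) f) (v : E) :
    ContDiff ℝ (⊤ : ℕ∞) (fun p => fderiv ℝ f p v) :=
  (hf.fderiv_right (m := (⊤ : ℕ∞)) (by simp)).clm_apply contDiff_const

theorem drl_comm {f : E → ℝ} (hf : ContDiff ℝ (⊤ : ℕ∞) f) (v w p : E) :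
    fderiv ℝ (fun q => fderiv ℝ f q v) p w = fderiv ℝ (fun q => fderiv ℝ f q w) p v := by
  have hd : DifferentiableAt ℝ (fderiv ℝ f) p :=
    (hf.fderiv_right (m := (⊤ : ℕ∞)) (by simp)).differentiable (by simp) p
  have key : ∀ v w : E, fderiv ℝ (fun q => fderiv ℝ f q v) p w
      = fderiv ℝ (fderiv ℝ f) p w v := by
    intro v w
    rw [fderiv_clm_apply hd (differentiableAt_const v)]
    simp
  rw [key, key]
  have hs : IsSymmSndFDerivAt ℝ f p := hf.contDiffAt.isSymmSndFDerivAt (by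
    simp only [minSmoothness_of_isRCLikeNormedField]
    exact WithTop.coe_le_coe.2 (le_top : (2 : ℕ∞) ≤ ⊤))
  exact hs w v

theorem drl_affine {f : E → ℝ} (hf : ContDiff ℝ (⊤ : ℕ∞) f) (v : E)
    (h : ∀ p, fderiv ℝ (fun q => fderiv ℝ f q v) p v = 0) (p : E) (s : ℝ) :
    f (p + s • v) = f p + s * fderiv ℝ f p v := by
  have hd : ∀ s : ℝ, HasDerivAt (fun s : ℝ => f (p + s • v) - s * fderiv ℝ f p v) 0 s := by
    intro s
    have h1 := drl_line hf v p s
    rw [drl_const (drl_smooth hf v) v h p s] at h1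
    have h2 := h1.sub ((hasDerivAt_id s).mul_const (fderiv ℝ f p v))
    rw [one_mul, sub_self] at h2
    exact h2
  have := is_const_of_deriv_eq_zero (fun s => (hd s).differentiableAt)
    (fun s => (hd s).deriv) s 0
  simp at this
  linarith

end gen

theorem drl_prim (l : V4 →L[ℝ] ℝ) (v : V4) (hl : l v = 1) (F : V4 → ℝ)
    (hF : ContDiff ℝ (⊤ : ℕ∞) F) :
    ∃ G : V4 → ℝ, ContDiff ℝ (⊤ : ℕ∞) G ∧ (∀ p, fderiv ℝ G p v = F p) ∧
      ∀ w, l w = 0 → (∀ p, fderiv ℝ F p w = 0) → ∀ p, fderiv ℝ G p w = 0 := by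
  let G : V4 → ℝ := fun p => ∫ u in (0:ℝ)..1, l p * F ((p - l p • v) + (l p * u) • v)
  have hG : ContDiff ℝ (⊤ : ℕ∞) G := by
    apply drl_int (fun q => l q.1 * F ((q.1 - l q.1 • v) + (l q.1 * q.2) • v))
    have hl1 : ContDiff ℝ (⊤ : ℕ∞) (fun q : V4 × ℝ => l q.1) := l.contDiff.comp contDiff_fst
    have h2 : ContDiff ℝ (⊤ : ℕ∞)
        (fun q : V4 × ℝ => (q.1 - l q.1 • v) + (l q.1 * q.2) • v) :=
      (contDiff_fst.sub (hl1.smul contDiff_const)).add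
        ((hl1.mul contDiff_snd).smul contDiff_const)
    exact hl1.mul (hF.comp h2)
  refine ⟨G, hG, fun p => ?_, fun w hw hFw p => ?_⟩
  · have h1 := drl_line hG v (p - l p • v) (l p)
    rw [sub_add_cancel] at h1
    have h2 : (fun s : ℝ => G ((p - l p • v) + s • v))
        = fun s => ∫ x in (0:ℝ)..s, F ((p - l p • v) + x • v) := by
      funext s
      have hls : l ((p - l p • v) + s • v) = s := by simp [hl]
      simp only [G, hls, add_sub_cancel_right]
      rw [intervalIntegral.integral_const_mul]
      have := intervalIntegral.mul_integral_comp_mul_left (a := 0) (b := 1)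
        (f := fun x => F ((p - l p • v) + x • v)) s
      simpa using this
    rw [h2] at h1
    have hc : Continuous fun x : ℝ => F ((p - l p • v) + x • v) := by
      have := hF.continuous
      fun_prop
    have h3 := (hc.integral_hasStrictDerivAt 0 (l p)).hasDerivAt
    rw [sub_add_cancel] at h3
    exact h1.unique h3
  · have h1 := drl_line hG w p 0
    have h2 : (fun s : ℝ => G (p + s • w)) = fun _ => G p := by
      funext s
      have hls : l (p + s • w) = l p := by simp [hw]
      simp only [G, hls]
      congr 1
      funext u
      congr 1
      rw [← drl_const hF w hFw ((p - l p • v) + (l p * u) • v) s]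
      congr 1
      abel
    rw [h2] at h1
    simpa using h1.unique (hasDerivAt_const _ _)

def drl_i (c1 c2 : ℝ) (q : V4) : V6 := (q.1, q.2.1, q.2.2.1, q.2.2.2, c1, c2)

theorem drl_i_smooth (c1 c2 : ℝ) : ContDiff ℝ (⊤ : ℕ∞) (drl_i c1 c2) := by
  unfold drl_i; fun_prop

theorem drl_i_fderiv {f : V6 → ℝ} (hf : ContDiff ℝ (⊤ : ℕ∞) f) (c1 c2 : ℝ) (q v : V4) :
    fderiv ℝ (fun q => f (drl_i c1 c2 q)) q v = fderiv ℝ f (drl_i c1 c2 q) (drl_i 0 0 v) := by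
  have h1 := drl_line (hf.comp (drl_i_smooth c1 c2)) v q 0
  have h2 := drl_line hf (drl_i 0 0 v) (drl_i c1 c2 q) 0
  have h3 : (fun s : ℝ => (f ∘ drl_i c1 c2) (q + s • v))
      = fun s => f (drl_i c1 c2 q + s • drl_i 0 0 v) := by
    funext s
    simp [drl_i]
  rw [h3] at h1
  have h4 := h1.unique h2
  simp only [zero_smul, add_zero] at h4
  exact h4

theorem drl_lin {f a b : V4 → ℝ} (ha : ContDiff ℝ (⊤ : ℕ∞) a) (hb : ContDiff ℝ (⊤ : ℕ∞) b)
    (c : ℝ) (h : ∀ q, f q = a q * c + b q) (q v : V4) :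
    fderiv ℝ f q v = fderiv ℝ a q v * c + fderiv ℝ b q v := by
  have h0 : f = fun q => a q * c + b q := funext h
  have ha' : DifferentiableAt ℝ a q := ha.differentiable (by simp) q
  have hb' : DifferentiableAt ℝ b q := hb.differentiable (by simp) q
  rw [h0, fderiv_fun_add (ha'.mul_const c) hb', fderiv_mul_const ha']
  simp [mul_comm]

/-- Poincare lemma with parameter t. -/
theorem drl_potential {A B C : V4 → ℝ} (hA : ContDiff ℝ (⊤ : ℕ∞) A)
    (hB : ContDiff ℝ (⊤ : ℕ∞) B) (hC : ContDiff ℝ (⊤ : ℕ∞) C)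
    (hBC : ∀ q, fderiv ℝ B q (0,1,0,0) + fderiv ℝ C q (0,0,1,0) = 0)
    (hAB : ∀ q, fderiv ℝ B q (0,0,0,1) = fderiv ℝ A q (0,0,1,0))
    (hAC : ∀ q, fderiv ℝ A q (0,1,0,0) + fderiv ℝ C q (0,0,0,1) = 0) :
    ∃ P : V4 → ℝ, ContDiff ℝ (⊤ : ℕ∞) P ∧ (∀ q, fderiv ℝ P q (0,0,0,1) = A q) ∧
      (∀ q, fderiv ℝ P q (0,0,1,0) = B q) ∧ (∀ q, fderiv ℝ P q (0,1,0,0) = - C q) := by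
  let lx : V4 →L[ℝ] ℝ := (ContinuousLinearMap.fst ℝ _ _).comp (ContinuousLinearMap.snd ℝ _ _)
  let ly : V4 →L[ℝ] ℝ := (ContinuousLinearMap.fst ℝ _ _).comp
    ((ContinuousLinearMap.snd ℝ _ _).comp (ContinuousLinearMap.snd ℝ _ _))
  let lz : V4 →L[ℝ] ℝ := (ContinuousLinearMap.snd ℝ _ _).comp
    ((ContinuousLinearMap.snd ℝ _ _).comp (ContinuousLinearMap.snd ℝ _ _))
  obtain ⟨P0, hP0, hP0z, -⟩ := drl_prim lz (0,0,0,1) (by simp [lz]) A hA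
  have hP0y := drl_smooth hP0 (0,0,1,0)
  let H : V4 → ℝ := fun q => B q - fderiv ℝ P0 q (0,0,1,0)
  have hH : ContDiff ℝ (⊤ : ℕ∞) H := hB.sub hP0y
  have hHz : ∀ q, fderiv ℝ H q (0,0,0,1) = 0 := by
    intro q
    rw [drl_lin hP0y hB (-1) (f := H) (fun q => by simp only [H]; ring), drl_comm hP0,
      funext hP0z, hAB]
    ring
  obtain ⟨K, hK, hKy, hKw⟩ := drl_prim ly (0,0,1,0) (by simp [ly]) H hH
  have hKz := hKw (0,0,0,1) (by simp [ly]) hHz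
  let P1 : V4 → ℝ := fun q => P0 q * 1 + K q
  have hP1 : ContDiff ℝ (⊤ : ℕ∞) P1 := (hP0.mul contDiff_const).add hK
  have hP1z : ∀ q, fderiv ℝ P1 q (0,0,0,1) = A q := by
    intro q
    rw [drl_lin hP0 hK 1 (f := P1) (fun q => rfl), hP0z, hKz]; ring
  have hP1y : ∀ q, fderiv ℝ P1 q (0,0,1,0) = B q := by
    intro q
    rw [drl_lin hP0 hK 1 (f := P1) (fun q => rfl), hKy]; simp only [H]; ring
  have hP1x := drl_smooth hP1 (0,1,0,0)
  let L : V4 → ℝ := fun q => fderiv ℝ P1 q (0,1,0,0) * (-1) + - C q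
  have hL : ContDiff ℝ (⊤ : ℕ∞) L :=
    (hP1x.mul contDiff_const).add hC.neg
  have hLd : ∀ q v, fderiv ℝ L q v = - fderiv ℝ C q v
      - fderiv ℝ (fun q => fderiv ℝ P1 q v) q (0,1,0,0) := by
    intro q v
    rw [drl_lin hP1x hC.neg (-1) (f := L) (fun q => rfl), drl_comm hP1, fderiv_fun_neg,
      neg_apply]
    ring
  obtain ⟨N, hN, hNx, hNw⟩ := drl_prim lx (0,1,0,0) (by simp [lx]) L hL
  have hNz := hNw (0,0,0,1) (by simp [lx]) (fun q => by
    rw [hLd, funext hP1z]; linarith [hAC q])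
  have hNy := hNw (0,0,1,0) (by simp [lx]) (fun q => by
    rw [hLd, funext hP1y]; linarith [hBC q])
  refine ⟨fun q => P1 q * 1 + N q, (hP1.mul contDiff_const).add hN, ?_, ?_, ?_⟩
  · intro q
    rw [drl_lin hP1 hN 1 (fun q => rfl), hP1z, hNz]; ring
  · intro q
    rw [drl_lin hP1 hN 1 (fun q => rfl), hP1y, hNy]; ring
  · intro q
    rw [drl_lin hP1 hN 1 (fun q => rfl), hNx]; simp only [L]; ring

/-- independence of zeta -/
theorem drl_indep {f : V6 → ℝ} (hf : ContDiff ℝ (⊤ : ℕ∞) f) {a b A B : V4 → ℝ}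
    (ha : ContDiff ℝ (⊤ : ℕ∞) a) (hb : ContDiff ℝ (⊤ : ℕ∞) b) (c1 c2 c : ℝ)
    (haz : ∀ q, fderiv ℝ a q (0,0,0,1) = A q) (hbz : ∀ q, fderiv ℝ b q (0,0,0,1) = B q)
    (h : ∀ q, fderiv ℝ f (drl_i c1 c2 q) (0,0,0,1,0,0) = A q * c + B q) (t x y z : ℝ) :
    f (t,x,y,z,c1,c2) - (a (t,x,y,z) * c + b (t,x,y,z))
      = f (t,x,y,0,c1,c2) - (a (t,x,y,0) * c + b (t,x,y,0)) := by
  have hm : ContDiff ℝ (⊤ : ℕ∞) (fun q => a q * c + b q) := (ha.mul contDiff_const).add hb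
  have hi : ContDiff ℝ (⊤ : ℕ∞) (fun q => f (drl_i c1 c2 q)) := hf.comp (drl_i_smooth c1 c2)
  have hR : ContDiff ℝ (⊤ : ℕ∞) (fun q => (a q * c + b q) * (-1) + f (drl_i c1 c2 q)) :=
    (hm.mul contDiff_const).add hi
  have := drl_const hR (0,0,0,1) (fun q => by
    rw [drl_lin hm hi (-1) (fun q => rfl), drl_lin ha hb c (fun q => rfl), drl_i_fderiv hf,
      haz, hbz]
    have := h q
    simp only [drl_i] at this ⊢
    rw [this]; ring) (t,x,y,0) z
  simp [drl_i] at this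
  linarith

theorem divergence_representation_lemma
    (f1 f2 : V6 → ℝ) (hf1 : ContDiff ℝ (⊤ : ℕ∞) f1) (hf2 : ContDiff ℝ (⊤ : ℕ∞) f2)
    -- f¹_{ζζ₁} = 0
    (h1 : ∀ p : V6, pd6 (0, 0, 0, 0, 1, 0) (pd6 (0, 0, 0, 1, 0, 0) f1) p = 0)
    -- f²_{ζζ₂} = 0
    (h2 : ∀ p : V6, pd6 (0, 0, 0, 0, 0, 1) (pd6 (0, 0, 0, 1, 0, 0) f2) p = 0)
    -- f¹_{ζζ₂} + f²_{ζζ₁} = 0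
    (h3 : ∀ p : V6, pd6 (0, 0, 0, 0, 0, 1) (pd6 (0, 0, 0, 1, 0, 0) f1) p
                  + pd6 (0, 0, 0, 0, 1, 0) (pd6 (0, 0, 0, 1, 0, 0) f2) p = 0)
    -- f¹_{ζx} + f²_{ζy} + f¹_{ζζ}·ζ₁ + f²_{ζζ}·ζ₂ = 0
    (h4 : ∀ p : V6, pd6 (0, 1, 0, 0, 0, 0) (pd6 (0, 0, 0, 1, 0, 0) f1) p
                  + pd6 (0, 0, 1, 0, 0, 0) (pd6 (0, 0, 0, 1, 0, 0) f2) p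
                  + pd6 (0, 0, 0, 1, 0, 0) (pd6 (0, 0, 0, 1, 0, 0) f1) p * p.2.2.2.2.1
                  + pd6 (0, 0, 0, 1, 0, 0) (pd6 (0, 0, 0, 1, 0, 0) f2) p * p.2.2.2.2.2 = 0) :
    ∃ Ψ : V4 → ℝ, ContDiff ℝ (⊤ : ℕ∞) Ψ ∧
      ∃ g1 g2 : V5 → ℝ, ContDiff ℝ (⊤ : ℕ∞) g1 ∧ ContDiff ℝ (⊤ : ℕ∞) g2 ∧
        ∀ t x y ζ ζ1 ζ2 : ℝ,
          f1 (t, x, y, ζ, ζ1, ζ2)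
            = pd4 (0, 0, 1, 0) Ψ (t, x, y, ζ) + pd4 (0, 0, 0, 1) Ψ (t, x, y, ζ) * ζ2
              + g1 (t, x, y, ζ1, ζ2) ∧
          f2 (t, x, y, ζ, ζ1, ζ2)
            = -pd4 (0, 1, 0, 0) Ψ (t, x, y, ζ) - pd4 (0, 0, 0, 1) Ψ (t, x, y, ζ) * ζ1
              + g2 (t, x, y, ζ1, ζ2) := by
  have hF1 := drl_smooth hf1 (0,0,0,1,0,0)
  have hF2 := drl_smooth hf2 (0,0,0,1,0,0)
  simp only [pd6, pd4] at *
  let F1 : V6 → ℝ := fun p => fderiv ℝ f1 p (0,0,0,1,0,0)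
  let F2 : V6 → ℝ := fun p => fderiv ℝ f2 p (0,0,0,1,0,0)
  change ContDiff ℝ (⊤ : ℕ∞) F1 at hF1
  change ContDiff ℝ (⊤ : ℕ∞) F2 at hF2
  change ∀ p, fderiv ℝ F1 p (0,0,0,0,1,0) = 0 at h1
  change ∀ p, fderiv ℝ F2 p (0,0,0,0,0,1) = 0 at h2
  change ∀ p, fderiv ℝ F1 p (0,0,0,0,0,1) + fderiv ℝ F2 p (0,0,0,0,1,0) = 0 at h3
  change ∀ p : V6, fderiv ℝ F1 p (0,1,0,0,0,0) + fderiv ℝ F2 p (0,0,1,0,0,0)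
    + fderiv ℝ F1 p (0,0,0,1,0,0) * p.2.2.2.2.1
    + fderiv ℝ F2 p (0,0,0,1,0,0) * p.2.2.2.2.2 = 0 at h4
  have h11 : ∀ p, fderiv ℝ (fun q => fderiv ℝ F1 q (0,0,0,0,0,1)) p (0,0,0,0,0,1) = 0 := by
    intro p
    have e : (fun q => fderiv ℝ F1 q (0,0,0,0,0,1))
        = fun q => - fderiv ℝ F2 q (0,0,0,0,1,0) := by
      funext q; linarith [h3 q]
    rw [e, fderiv_fun_neg, neg_apply, drl_comm hF2, funext h2]
    simp
  have h22 : ∀ p, fderiv ℝ (fun q => fderiv ℝ F2 q (0,0,0,0,1,0)) p (0,0,0,0,1,0) = 0 := by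
    intro p
    have e : (fun q => fderiv ℝ F2 q (0,0,0,0,1,0))
        = fun q => - fderiv ℝ F1 q (0,0,0,0,0,1) := by
      funext q; linarith [h3 q]
    rw [e, fderiv_fun_neg, neg_apply, drl_comm hF1, funext h1]
    simp
  let A : V4 → ℝ := fun q => fderiv ℝ F1 (drl_i 0 0 q) (0,0,0,0,0,1)
  let B : V4 → ℝ := fun q => F1 (drl_i 0 0 q)
  let C : V4 → ℝ := fun q => F2 (drl_i 0 0 q)
  have hA : ContDiff ℝ (⊤ : ℕ∞) A :=
    (drl_smooth hF1 (0,0,0,0,0,1)).comp (drl_i_smooth 0 0)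
  have hB : ContDiff ℝ (⊤ : ℕ∞) B := hF1.comp (drl_i_smooth 0 0)
  have hC : ContDiff ℝ (⊤ : ℕ∞) C := hF2.comp (drl_i_smooth 0 0)
  have e1 : ∀ c1 c2 q, F1 (drl_i c1 c2 q) = A q * c2 + B q := by
    intro c1 c2 q
    have i1 := drl_const hF1 _ h1 (drl_i 0 c2 q) c1
    have i2 := drl_affine hF1 _ h11 (drl_i 0 0 q) c2
    have j1 : drl_i 0 c2 q + c1 • (0,0,0,0,1,0) = drl_i c1 c2 q := by simp [drl_i]
    have j2 : drl_i 0 0 q + c2 • (0,0,0,0,0,1) = drl_i 0 c2 q := by simp [drl_i]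
    rw [j1] at i1
    rw [j2] at i2
    rw [i1, i2]; simp only [A, B]; ring
  have e2 : ∀ c1 c2 q, F2 (drl_i c1 c2 q) = A q * (-c1) + C q := by
    intro c1 c2 q
    have i1 := drl_const hF2 _ h2 (drl_i c1 0 q) c2
    have i2 := drl_affine hF2 _ h22 (drl_i 0 0 q) c1
    have j1 : drl_i c1 0 q + c2 • (0,0,0,0,0,1) = drl_i c1 c2 q := by simp [drl_i]
    have j2 : drl_i 0 0 q + c1 • (0,0,0,0,1,0) = drl_i c1 0 q := by simp [drl_i]
    rw [j1] at i1
    rw [j2] at i2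
    have := h3 (drl_i 0 0 q)
    rw [i1, i2]; simp only [A, C]; linear_combination c1 * this
  have d1 : ∀ c1 c2 q v, fderiv ℝ F1 (drl_i c1 c2 q) (drl_i 0 0 v)
      = fderiv ℝ A q v * c2 + fderiv ℝ B q v := by
    intro c1 c2 q v
    rw [← drl_i_fderiv hF1, drl_lin hA hB c2 (e1 c1 c2)]
  have d2 : ∀ c1 c2 q v, fderiv ℝ F2 (drl_i c1 c2 q) (drl_i 0 0 v)
      = fderiv ℝ A q v * (-c1) + fderiv ℝ C q v := by
    intro c1 c2 q v
    rw [← drl_i_fderiv hF2, drl_lin hA hC (-c1) (e2 c1 c2)]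
  have k : ∀ c1 c2 q, (fderiv ℝ A q (0,1,0,0) * c2 + fderiv ℝ B q (0,1,0,0))
      + (fderiv ℝ A q (0,0,1,0) * (-c1) + fderiv ℝ C q (0,0,1,0))
      + (fderiv ℝ A q (0,0,0,1) * c2 + fderiv ℝ B q (0,0,0,1)) * c1
      + (fderiv ℝ A q (0,0,0,1) * (-c1) + fderiv ℝ C q (0,0,0,1)) * c2 = 0 := by
    intro c1 c2 q
    rw [← d1 c1 c2, ← d1 c1 c2, ← d2 c1 c2, ← d2 c1 c2]
    exact h4 (drl_i c1 c2 q)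
  obtain ⟨P, hP, hPz, hPy, hPx⟩ := drl_potential hA hB hC
    (fun q => by linarith [k 0 0 q]) (fun q => by linarith [k 0 0 q, k 1 0 q])
    (fun q => by linarith [k 0 0 q, k 0 1 q])
  let lz : V4 →L[ℝ] ℝ := (ContinuousLinearMap.snd ℝ _ _).comp
    ((ContinuousLinearMap.snd ℝ _ _).comp (ContinuousLinearMap.snd ℝ _ _))
  obtain ⟨Q, hQ, hQz, -⟩ := drl_prim lz (0,0,0,1) (by simp [lz]) P hP
  have hQy := drl_smooth hQ (0,0,1,0)
  have hQx := drl_smooth hQ (0,1,0,0)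
  have hQx' : ContDiff ℝ (⊤ : ℕ∞) (fun q => - fderiv ℝ Q q (0,1,0,0)) := hQx.neg
  have hQyz : ∀ q, fderiv ℝ (fun q => fderiv ℝ Q q (0,0,1,0)) q (0,0,0,1) = B q := by
    intro q
    rw [drl_comm hQ, funext hQz, hPy]
  have hQxz : ∀ q, fderiv ℝ (fun q => - fderiv ℝ Q q (0,1,0,0)) q (0,0,0,1) = C q := by
    intro q
    rw [fderiv_fun_neg, neg_apply, drl_comm hQ, funext hQz, hPx, neg_neg]
  have hj : ContDiff ℝ (⊤ : ℕ∞)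
      (fun r : V5 => ((r.1, r.2.1, r.2.2.1, 0) : V4)) := by fun_prop
  have hj6 : ContDiff ℝ (⊤ : ℕ∞)
      (fun r : V5 => ((r.1, r.2.1, r.2.2.1, 0, r.2.2.2.1, r.2.2.2.2) : V6)) := by fun_prop
  have hc1 : ContDiff ℝ (⊤ : ℕ∞) (fun r : V5 => r.2.2.2.1) := by fun_prop
  have hc2 : ContDiff ℝ (⊤ : ℕ∞) (fun r : V5 => r.2.2.2.2) := by fun_prop
  refine ⟨Q, hQ,
    fun r => f1 (r.1, r.2.1, r.2.2.1, 0, r.2.2.2.1, r.2.2.2.2)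
      - (P (r.1, r.2.1, r.2.2.1, 0) * r.2.2.2.2
        + fderiv ℝ Q (r.1, r.2.1, r.2.2.1, 0) (0,0,1,0)),
    fun r => f2 (r.1, r.2.1, r.2.2.1, 0, r.2.2.2.1, r.2.2.2.2)
      - (P (r.1, r.2.1, r.2.2.1, 0) * (- r.2.2.2.1)
        + - fderiv ℝ Q (r.1, r.2.1, r.2.2.1, 0) (0,1,0,0)),
    (hf1.comp hj6).sub (((hP.comp hj).mul hc2).add (hQy.comp hj)),
    (hf2.comp hj6).sub (((hP.comp hj).mul hc1.neg).add (hQx'.comp hj)), ?_⟩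
  intro t x y z c1 c2
  have r1 := drl_indep hf1 hP hQy c1 c2 c2 hPz hQyz (e1 c1 c2) t x y z
  have r2 := drl_indep hf2 hP hQx' c1 c2 (-c1) hPz hQxz (e2 c1 c2) t x y z
  rw [hQz]
  constructor
  · linear_combination r1
  · linear_combination r2
end
end

section
/- Let a, b, c : ℝ³ → ℝ be smooth functions of the variables (t, ζ₁, ζ₂) satisfying b_{ζ₁ζ₂} = a_{ζ₂ζ₂} + c_{ζ₁ζ₁}. Then there exist smooth functions f¹, f² : ℝ³ → ℝ of (t, ζ₁, ζ₂) such that a = f¹_{ζ₁}, b = f¹_{ζ₂} + f²_{ζ₁}, and c = f²_{ζ₂}. -/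
/-!
Statement 9: if smooth a, b, c of (t, ζ₁, ζ₂) satisfy b_{ζ₁ζ₂} = a_{ζ₂ζ₂} + c_{ζ₁ζ₁},
then there exist smooth f¹, f² of (t, ζ₁, ζ₂) with a = f¹_{ζ₁}, b = f¹_{ζ₂} + f²_{ζ₁},
c = f²_{ζ₂}.
-/

noncomputable section

/-- Directional (partial) derivative on ℝ³ with coordinates (t, ζ₁, ζ₂). -/
def pd3 (v : ℝ × ℝ × ℝ) (f : ℝ × ℝ × ℝ → ℝ) (p : ℝ × ℝ × ℝ) : ℝ := fderiv ℝ f p v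

open Set Filter Topology MeasureTheory in
theorem aux_contDiff_param (n : ℕ) : ∀ {F : Type} [NormedAddCommGroup F] [NormedSpace ℝ F]
    [CompleteSpace F] (f : (ℝ × ℝ × ℝ) × ℝ → F), ContDiff ℝ (⊤ : ℕ∞) f →
    ContDiff ℝ (n : WithTop ℕ∞) (fun p => ∫ s in (0:ℝ)..1, f (p, s)) := by
  induction n with
  | zero =>
    intro F _ _ _ f hf
    have := hf.continuous
    simp only [Nat.cast_zero, contDiff_zero]
    exact intervalIntegral.continuous_parametric_intervalIntegral_of_continuous'
      (f := fun p s => f (p, s)) (by simpa [Function.uncurry_def] using this) 0 1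
  | succ n ih =>
    intro F _ _ _ f hf
    have hd : ContDiff ℝ (⊤ : ℕ∞) (fun q : (ℝ × ℝ × ℝ) × ℝ =>
        (fderiv ℝ f q).comp (ContinuousLinearMap.inl ℝ (ℝ × ℝ × ℝ) ℝ)) :=
      (hf.fderiv_right (m := (⊤ : ℕ∞)) (by simp)).clm_comp contDiff_const
    rw [Nat.cast_add, Nat.cast_one, contDiff_succ_iff_hasFDerivAt]
    refine ⟨_, ih _ hd, fun x => ?_⟩
    have hK : IsCompact (Metric.closedBall x 1 ×ˢ Icc (0:ℝ) 1) :=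
      (isCompact_closedBall x 1).prod isCompact_Icc
    obtain ⟨C, hC⟩ := hK.exists_bound_of_continuousOn hd.continuous.continuousOn
    have hfc := hf.continuous
    have hdc := hd.continuous
    refine intervalIntegral.hasFDerivAt_integral_of_dominated_of_fderiv_le
      (F := fun p s => f (p, s)) (F' := fun p s => (fderiv ℝ f (p, s)).comp
        (ContinuousLinearMap.inl ℝ (ℝ × ℝ × ℝ) ℝ)) (bound := fun _ => C)
      (Metric.closedBall_mem_nhds x one_pos) ?_ ?_ ?_ ?_ ?_ ?_
    · exact Eventually.of_forall fun p => (by fun_prop : Continuous fun s => f (p, s)).aestronglyMeasurable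
    · exact (by fun_prop : Continuous fun s => f (x, s)).intervalIntegrable _ _
    · exact (hdc.comp (by fun_prop : Continuous fun s : ℝ => (x, s))).aestronglyMeasurable
    · refine Eventually.of_forall fun t ht y hy => hC (y, t) ⟨hy, ?_⟩
      rw [uIoc_of_le zero_le_one] at ht
      exact ⟨ht.1.le, ht.2⟩
    · exact intervalIntegrable_const
    · refine Eventually.of_forall fun t ht y hy => ?_
      have h1 : HasFDerivAt f (fderiv ℝ f (y, t)) (y, t) :=
        (hf.differentiable (by simp) _).hasFDerivAt
      exact h1.comp y (hasFDerivAt_prodMk_left y t)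

theorem aux_prim (v : ℝ × ℝ × ℝ) (l : ℝ × ℝ × ℝ →L[ℝ] ℝ) (hl : l v = 1)
    (g : ℝ × ℝ × ℝ → ℝ) (hg : ContDiff ℝ (⊤ : ℕ∞) g) :
    ∃ G : ℝ × ℝ × ℝ → ℝ, ContDiff ℝ (⊤ : ℕ∞) G ∧ ∀ p, pd3 v G p = g p := by
  let h : (ℝ × ℝ × ℝ) × ℝ → ℝ := fun q => l q.1 * g (q.1 - l q.1 • v + (q.2 * l q.1) • v)
  have hh : ContDiff ℝ (⊤ : ℕ∞) h := by
    have : ContDiff ℝ (⊤ : ℕ∞) (fun q : (ℝ × ℝ × ℝ) × ℝ => l q.1) := l.contDiff.comp contDiff_fst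
    exact this.mul (hg.comp ((contDiff_fst.sub (this.smul contDiff_const)).add
      ((contDiff_snd.mul this).smul contDiff_const)))
  have hG : ContDiff ℝ (⊤ : ℕ∞) (fun p => ∫ s in (0:ℝ)..1, h (p, s)) :=
    contDiff_infty.2 fun n => aux_contDiff_param n h hh
  refine ⟨_, hG, fun p => ?_⟩
  have hval : ∀ p, (∫ s in (0:ℝ)..1, h (p, s)) = ∫ s in (0:ℝ)..(l p), g (p - l p • v + s • v) := by
    intro p
    have := intervalIntegral.mul_integral_comp_mul_right (a := 0) (b := 1)
      (f := fun s => g (p - l p • v + s • v)) (l p)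
    simp only [zero_mul, one_mul] at this
    simp only [h, intervalIntegral.integral_const_mul]
    exact this
  have h1 : HasDerivAt (fun r : ℝ => ∫ s in (0:ℝ)..1, h (p + r • v, s))
      (pd3 v (fun p => ∫ s in (0:ℝ)..1, h (p, s)) p) 0 := by
    have hx := (hG.differentiable (by simp) p).hasFDerivAt
    have hline : HasDerivAt (fun r : ℝ => p + r • v) v 0 := by
      simpa using ((hasDerivAt_id (0:ℝ)).smul_const v).const_add p
    exact HasFDerivAt.comp_hasDerivAt_of_eq (0:ℝ) hx hline (by simp)
  have hc : Continuous (fun s : ℝ => g (p - l p • v + s • v)) :=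
    hg.continuous.comp (by fun_prop)
  have h2 : HasDerivAt (fun r : ℝ => ∫ s in (0:ℝ)..1, h (p + r • v, s)) (g p) 0 := by
    have e : (fun r : ℝ => ∫ s in (0:ℝ)..1, h (p + r • v, s)) =
        fun r : ℝ => ∫ s in (0:ℝ)..(l p + r), g (p - l p • v + s • v) := by
      funext r
      rw [hval]
      have e1 : l (p + r • v) = l p + r := by simp [hl]
      have e2 : p + r • v - (l p + r) • v = p - l p • v := by rw [add_smul]; abel
      rw [e1, e2]
    rw [e]
    have hF := (hc.integral_hasStrictDerivAt 0 (l p + 0)).hasDerivAt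
    have := HasDerivAt.comp_const_add (l p) 0 hF
    simpa using this
  exact h1.unique h2

theorem aux_pd_smooth (v : ℝ × ℝ × ℝ) {f : ℝ × ℝ × ℝ → ℝ} (hf : ContDiff ℝ (⊤ : ℕ∞) f) :
    ContDiff ℝ (⊤ : ℕ∞) (pd3 v f) :=
  (hf.fderiv_right (m := (⊤ : ℕ∞)) (by simp)).clm_apply contDiff_const

theorem aux_pd_comm (v w : ℝ × ℝ × ℝ) {f : ℝ × ℝ × ℝ → ℝ} (hf : ContDiff ℝ (⊤ : ℕ∞) f)
    (p : ℝ × ℝ × ℝ) : pd3 v (pd3 w f) p = pd3 w (pd3 v f) p := by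
  have hs : IsSymmSndFDerivAt ℝ f p :=
    hf.contDiffAt.isSymmSndFDerivAt (by simp only [minSmoothness_of_isRCLikeNormedField]; exact WithTop.coe_le_coe.2 le_top)
  have hd : DifferentiableAt ℝ (fderiv ℝ f) p :=
    (hf.fderiv_right (m := (⊤ : ℕ∞)) (by simp)).differentiable (by simp) p
  have key : ∀ v w, pd3 v (pd3 w f) p = fderiv ℝ (fderiv ℝ f) p v w := by
    intro v w
    have : HasFDerivAt (pd3 w f) _ p := hd.hasFDerivAt.clm_apply (hasFDerivAt_const w p)
    simp only [pd3] at *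
    rw [this.fderiv]
    simp
  rw [key, key]
  exact hs v w

theorem aux_pd_add (v : ℝ × ℝ × ℝ) {f g : ℝ × ℝ × ℝ → ℝ} (hf : ContDiff ℝ (⊤ : ℕ∞) f)
    (hg : ContDiff ℝ (⊤ : ℕ∞) g) (p : ℝ × ℝ × ℝ) :
    pd3 v (fun q => f q + g q) p = pd3 v f p + pd3 v g p := by
  unfold pd3
  rw [fderiv_fun_add (hf.differentiable (by simp) p) (hg.differentiable (by simp) p)]
  rfl

theorem aux_pd_sub (v : ℝ × ℝ × ℝ) {f g : ℝ × ℝ × ℝ → ℝ} (hf : ContDiff ℝ (⊤ : ℕ∞) f)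
    (hg : ContDiff ℝ (⊤ : ℕ∞) g) (p : ℝ × ℝ × ℝ) :
    pd3 v (fun q => f q - g q) p = pd3 v f p - pd3 v g p := by
  unfold pd3
  rw [fderiv_fun_sub (hf.differentiable (by simp) p) (hg.differentiable (by simp) p)]
  rfl

theorem aux_pd_comp (v : ℝ × ℝ × ℝ) (P : ℝ × ℝ × ℝ →L[ℝ] ℝ × ℝ × ℝ) {f : ℝ × ℝ × ℝ → ℝ}
    (hf : ContDiff ℝ (⊤ : ℕ∞) f) (p : ℝ × ℝ × ℝ) :
    pd3 v (fun q => f (P q)) p = pd3 (P v) f (P p) := by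
  unfold pd3
  have := (hf.differentiable (by simp) (P p)).hasFDerivAt.comp p P.hasFDerivAt
  have h2 : fderiv ℝ (fun q => f (P q)) p = _ := this.fderiv
  rw [h2]
  rfl

theorem aux_const (v : ℝ × ℝ × ℝ) {f : ℝ × ℝ × ℝ → ℝ} (hf : ContDiff ℝ (⊤ : ℕ∞) f)
    (h : ∀ p, pd3 v f p = 0) (p : ℝ × ℝ × ℝ) (r : ℝ) : f (p + r • v) = f p := by
  have hd : ∀ r : ℝ, HasDerivAt (fun r : ℝ => f (p + r • v)) 0 r := by
    intro r
    have hx := (hf.differentiable (by simp) (p + r • v)).hasFDerivAt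
    have hline : HasDerivAt (fun r : ℝ => p + r • v) v r := by
      simpa using ((hasDerivAt_id r).smul_const v).const_add p
    have := hx.comp_hasDerivAt r hline
    rw [show fderiv ℝ f (p + r • v) v = 0 from h _] at this
    exact this
  have := is_const_of_deriv_eq_zero (fun r => (hd r).differentiableAt) (fun r => (hd r).deriv) r 0
  simpa using this

theorem second_order_divergence_representation
    (a b c : ℝ × ℝ × ℝ → ℝ)
    (ha : ContDiff ℝ (⊤ : ℕ∞) a) (hb : ContDiff ℝ (⊤ : ℕ∞) b) (hc : ContDiff ℝ (⊤ : ℕ∞) c)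
    (hcompat : ∀ p : ℝ × ℝ × ℝ,
      pd3 (0, 0, 1) (pd3 (0, 1, 0) b) p
        = pd3 (0, 0, 1) (pd3 (0, 0, 1) a) p + pd3 (0, 1, 0) (pd3 (0, 1, 0) c) p) :
    ∃ f1 f2 : ℝ × ℝ × ℝ → ℝ, ContDiff ℝ (⊤ : ℕ∞) f1 ∧ ContDiff ℝ (⊤ : ℕ∞) f2 ∧
      ∀ p : ℝ × ℝ × ℝ,
        a p = pd3 (0, 1, 0) f1 p ∧
        b p = pd3 (0, 0, 1) f1 p + pd3 (0, 1, 0) f2 p ∧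
        c p = pd3 (0, 0, 1) f2 p := by
  let l1 : ℝ × ℝ × ℝ →L[ℝ] ℝ :=
    (ContinuousLinearMap.fst ℝ ℝ ℝ).comp (ContinuousLinearMap.snd ℝ ℝ (ℝ × ℝ))
  let l2 : ℝ × ℝ × ℝ →L[ℝ] ℝ :=
    (ContinuousLinearMap.snd ℝ ℝ ℝ).comp (ContinuousLinearMap.snd ℝ ℝ (ℝ × ℝ))
  let l0 : ℝ × ℝ × ℝ →L[ℝ] ℝ := ContinuousLinearMap.fst ℝ ℝ (ℝ × ℝ)
  -- projections killing the first and the second slot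
  let P1 : ℝ × ℝ × ℝ →L[ℝ] ℝ × ℝ × ℝ := l0.prod ((0 : ℝ × ℝ × ℝ →L[ℝ] ℝ).prod l2)
  let P2 : ℝ × ℝ × ℝ →L[ℝ] ℝ × ℝ × ℝ := l0.prod (l1.prod 0)
  have hP1 : ∀ t x y, P1 (t, x, y) = (t, 0, y) := fun _ _ _ => rfl
  have hP2 : ∀ t x y, P2 (t, x, y) = (t, x, 0) := fun _ _ _ => rfl
  obtain ⟨A, hA, hA1⟩ := aux_prim (0, 1, 0) l1 rfl a ha
  obtain ⟨C, hC, hC2⟩ := aux_prim (0, 0, 1) l2 rfl c hc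
  have hA1' : pd3 (0, 1, 0) A = a := funext hA1
  have hC2' : pd3 (0, 0, 1) C = c := funext hC2
  have hA2 := aux_pd_smooth (0, 0, 1) hA
  have hC1 := aux_pd_smooth (0, 1, 0) hC
  let r : ℝ × ℝ × ℝ → ℝ := fun p => b p - pd3 (0, 0, 1) A p - pd3 (0, 1, 0) C p
  have hr : ContDiff ℝ (⊤ : ℕ∞) r := (hb.sub hA2).sub hC1
  have hr1 := aux_pd_smooth (0, 1, 0) hr
  have hrxy : ∀ p, pd3 (0, 0, 1) (pd3 (0, 1, 0) r) p = 0 := by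
    intro p
    have e1 : pd3 (0, 1, 0) r = fun p => pd3 (0, 1, 0) b p - pd3 (0, 0, 1) a p
        - pd3 (0, 1, 0) (pd3 (0, 1, 0) C) p := by
      funext q
      rw [aux_pd_sub _ (hb.sub hA2) hC1, aux_pd_sub _ hb hA2, aux_pd_comm _ _ hA, hA1']
    rw [e1, aux_pd_sub _ ((aux_pd_smooth _ hb).sub (aux_pd_smooth _ ha)) (aux_pd_smooth _ hC1),
      aux_pd_sub _ (aux_pd_smooth _ hb) (aux_pd_smooth _ ha), hcompat,
      aux_pd_comm _ _ hC1]
    have e2 : pd3 (0, 0, 1) (pd3 (0, 1, 0) C) = pd3 (0, 1, 0) c := by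
      funext q
      rw [aux_pd_comm _ _ hC, hC2']
    rw [e2]
    ring
  have hrP2 : ContDiff ℝ (⊤ : ℕ∞) (fun p => r (P2 p)) := hr.comp P2.contDiff
  have hsplit : ∀ t x y, r (t, x, y) - r (t, x, 0) = r (t, 0, y) - r (t, 0, 0) := by
    intro t x y
    have hz : ∀ p, pd3 (0, 1, 0) (fun p => r p - r (P2 p)) p = 0 := by
      rintro ⟨t, x, y⟩
      rw [aux_pd_sub _ hr hrP2, aux_pd_comp _ _ hr, hP2, hP2]
      have := aux_const (0, 0, 1) hr1 hrxy (t, x, 0) y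
      simp at this
      rw [this, sub_self]
    have := aux_const (0, 1, 0) (hr.sub hrP2) hz (t, 0, y) x
    simpa [hP2] using this
  obtain ⟨α, hα, hα2⟩ := aux_prim (0, 0, 1) l2 rfl (fun p => r p - r (P2 p)) (hr.sub hrP2)
  obtain ⟨β, hβ, hβ1⟩ := aux_prim (0, 1, 0) l1 rfl r hr
  have hαP : ContDiff ℝ (⊤ : ℕ∞) (fun p => α (P1 p)) := hα.comp P1.contDiff
  have hβP : ContDiff ℝ (⊤ : ℕ∞) (fun p => β (P2 p)) := hβ.comp P2.contDiff
  have hzero : ∀ f p, pd3 (0, 0, 0) f p = 0 := fun f p => (fderiv ℝ f p).map_zero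
  refine ⟨fun p => A p + α (P1 p), fun p => C p + β (P2 p), hA.add hαP, hC.add hβP, ?_⟩
  rintro ⟨t, x, y⟩
  rw [aux_pd_add _ hA hαP, aux_pd_add _ hC hβP, aux_pd_add _ hA hαP, aux_pd_add _ hC hβP,
    aux_pd_comp _ _ hα, aux_pd_comp _ _ hβ, aux_pd_comp _ _ hα, aux_pd_comp _ _ hβ]
  simp only [hP1, hP2]
  rw [hzero, hzero, hA1, hC2, hα2, hβ1, hP2]
  refine ⟨by simp, ?_, by simp⟩
  have := hsplit t x y
  have hrd : r (t, x, y) = b (t, x, y) - pd3 (0, 0, 1) A (t, x, y) - pd3 (0, 1, 0) C (t, x, y) := rfl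
  linarith
end
end

section
/- Let f¹, f² : ℝ⁵ → ℝ be smooth functions of (t, x, y, ζ₁, ζ₂), let σ : ℝ → ℝ be smooth, and let ψ : ℝ³ → ℝ be a smooth solution of ζ_t + ψ_x ζ_y − ψ_y ζ_x = ∂_x[f¹(t,x,y,ζ_x,ζ_y)] + ∂_y[f²(t,x,y,ζ_x,ζ_y)], where ζ := ψ_xx + ψ_yy and ∂_x, ∂_y differentiate the full composition. Then ψ̃(t,x,y) := ψ(t,x,y) + (σ(t)/2)(x² + y²) is a smooth solution of the equation from the same class with arbitrary elements f̃¹(t,x,y,ζ₁,ζ₂) := f¹(t,x,y,ζ₁,ζ₂) + (σ(t)/2)(x²+y²)·ζ₂ + σ'(t)·x and f̃²(t,x,y,ζ₁,ζ₂) := f²(t,x,y,ζ₁,ζ₂) − (σ(t)/2)(x²+y²)·ζ₁ + σ'(t)·y. -/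
noncomputable section

/-- The full composition (t,x,y) ↦ f(t, x, y, ζ_x(t,x,y), ζ_y(t,x,y)). -/
def fcomp (f : V5 → ℝ) (ψ : ℝ × ℝ × ℝ → ℝ) : ℝ × ℝ × ℝ → ℝ :=
  fun p => f (p.1, p.2.1, p.2.2, dX (vort ψ) p, dY (vort ψ) p)

/-- ψ is a smooth solution of the generalized vorticity equation
ζ_t + ψ_x ζ_y − ψ_y ζ_x = ∂_x[f¹(t,x,y,ζ_x,ζ_y)] + ∂_y[f²(t,x,y,ζ_x,ζ_y)]. -/
def IsGenVortSol (f1 f2 : V5 → ℝ) (ψ : ℝ × ℝ × ℝ → ℝ) : Prop :=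
  ContDiff ℝ (⊤ : ℕ∞) ψ ∧ ∀ p : ℝ × ℝ × ℝ,
    dT (vort ψ) p + dX ψ p * dY (vort ψ) p - dY ψ p * dX (vort ψ) p
      = dX (fcomp f1 ψ) p + dY (fcomp f2 ψ) p

abbrev V3 := ℝ × ℝ × ℝ

lemma smooth_dir {f : V3 → ℝ} (hf : ContDiff ℝ (⊤ : ℕ∞) f) (v : V3) :
    ContDiff ℝ (⊤ : ℕ∞) (fun p => fderiv ℝ f p v) :=
  (hf.fderiv_right (m := ((⊤ : ℕ∞) : WithTop ℕ∞)) (by simp)).clm_apply contDiff_const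

lemma smooth_diff {f : V3 → ℝ} (hf : ContDiff ℝ (⊤ : ℕ∞) f) : Differentiable ℝ f :=
  hf.differentiable (by simp)

lemma smooth_dX {f : V3 → ℝ} (hf : ContDiff ℝ (⊤ : ℕ∞) f) : ContDiff ℝ (⊤ : ℕ∞) (dX f) :=
  smooth_dir hf _
lemma smooth_dY {f : V3 → ℝ} (hf : ContDiff ℝ (⊤ : ℕ∞) f) : ContDiff ℝ (⊤ : ℕ∞) (dY f) :=
  smooth_dir hf _

lemma dX_dY_comm {f : V3 → ℝ} (hf : ContDiff ℝ (⊤ : ℕ∞) f) (p : V3) :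
    dX (dY f) p = dY (dX f) p := by
  have hd : DifferentiableAt ℝ (fderiv ℝ f) p :=
    ((hf.fderiv_right (m := ((⊤ : ℕ∞) : WithTop ℕ∞)) (by simp)).differentiable (by simp)) p
  have hs : IsSymmSndFDerivAt ℝ f p := by
    apply (hf.contDiffAt).isSymmSndFDerivAt
    simp only [minSmoothness_of_isRCLikeNormedField]
    exact WithTop.coe_le_coe.2 (le_top : (2 : ℕ∞) ≤ ⊤)
  have key : ∀ v w : V3, fderiv ℝ (fun q => fderiv ℝ f q v) p w
      = fderiv ℝ (fderiv ℝ f) p w v := by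
    intro v w
    rw [fderiv_clm_apply hd (differentiableAt_const v)]
    simp
  have h1 := key (0, 0, 1) (0, 1, 0)
  have h2 := key (0, 1, 0) (0, 0, 1)
  have h3 := hs.eq (0, 1, 0) (0, 0, 1)
  exact h1.trans (h3.trans h2.symm)

/-- coordinate curves -/
lemma dX_of {f : V3 → ℝ} {p : V3} {d : ℝ} (hf : DifferentiableAt ℝ f p)
    (h : HasDerivAt (fun s => f (p.1, s, p.2.2)) d p.2.1) : dX f p = d := by
  have hl : HasDerivAt (fun s : ℝ => ((p.1, s, p.2.2) : V3)) (0, 1, 0) p.2.1 :=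
    (hasDerivAt_const _ _).prodMk ((hasDerivAt_id _).prodMk (hasDerivAt_const _ _))
  exact (hf.hasFDerivAt.comp_hasDerivAt (f := fun s : ℝ => ((p.1, s, p.2.2) : V3)) p.2.1 hl).unique h

lemma dY_of {f : V3 → ℝ} {p : V3} {d : ℝ} (hf : DifferentiableAt ℝ f p)
    (h : HasDerivAt (fun s => f (p.1, p.2.1, s)) d p.2.2) : dY f p = d := by
  have hl : HasDerivAt (fun s : ℝ => ((p.1, p.2.1, s) : V3)) (0, 0, 1) p.2.2 :=
    (hasDerivAt_const _ _).prodMk ((hasDerivAt_const _ _).prodMk (hasDerivAt_id _))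
  exact (hf.hasFDerivAt.comp_hasDerivAt (f := fun s : ℝ => ((p.1, p.2.1, s) : V3)) p.2.2 hl).unique h

lemma dT_of {f : V3 → ℝ} {p : V3} {d : ℝ} (hf : DifferentiableAt ℝ f p)
    (h : HasDerivAt (fun s => f (s, p.2.1, p.2.2)) d p.1) : dT f p = d := by
  have hl : HasDerivAt (fun s : ℝ => ((s, p.2.1, p.2.2) : V3)) (1, 0, 0) p.1 :=
    (hasDerivAt_id _).prodMk ((hasDerivAt_const _ _).prodMk (hasDerivAt_const _ _))
  exact (hf.hasFDerivAt.comp_hasDerivAt (f := fun s : ℝ => ((s, p.2.1, p.2.2) : V3)) p.1 hl).unique h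

lemma dX_add {f g : V3 → ℝ} {p : V3} (hf : DifferentiableAt ℝ f p) (hg : DifferentiableAt ℝ g p) :
    dX (fun q => f q + g q) p = dX f p + dX g p := by
  simp [dX, fderiv_fun_add hf hg]
lemma dY_add {f g : V3 → ℝ} {p : V3} (hf : DifferentiableAt ℝ f p) (hg : DifferentiableAt ℝ g p) :
    dY (fun q => f q + g q) p = dY f p + dY g p := by
  simp [dY, fderiv_fun_add hf hg]
lemma dT_add {f g : V3 → ℝ} {p : V3} (hf : DifferentiableAt ℝ f p) (hg : DifferentiableAt ℝ g p) :
    dT (fun q => f q + g q) p = dT f p + dT g p := by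
  simp [dT, fderiv_fun_add hf hg]
lemma dY_sub {f g : V3 → ℝ} {p : V3} (hf : DifferentiableAt ℝ f p) (hg : DifferentiableAt ℝ g p) :
    dY (fun q => f q - g q) p = dY f p - dY g p := by
  simp [dY, fderiv_fun_sub hf hg]
lemma dX_mul {f g : V3 → ℝ} {p : V3} (hf : DifferentiableAt ℝ f p) (hg : DifferentiableAt ℝ g p) :
    dX (fun q => f q * g q) p = f p * dX g p + g p * dX f p := by
  simp [dX, fderiv_fun_mul hf hg]
lemma dY_mul {f g : V3 → ℝ} {p : V3} (hf : DifferentiableAt ℝ f p) (hg : DifferentiableAt ℝ g p) :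
    dY (fun q => f q * g q) p = f p * dY g p + g p * dY f p := by
  simp [dY, fderiv_fun_mul hf hg]

theorem equivalence_transformation_R_sigma
    (f1 f2 : V5 → ℝ) (hf1 : ContDiff ℝ (⊤ : ℕ∞) f1) (hf2 : ContDiff ℝ (⊤ : ℕ∞) f2)
    (σ : ℝ → ℝ) (hσ : ContDiff ℝ (⊤ : ℕ∞) σ)
    (ψ : ℝ × ℝ × ℝ → ℝ) (h : IsGenVortSol f1 f2 ψ) :
    IsGenVortSol
      (fun q => f1 q + σ q.1 / 2 * (q.2.1 ^ 2 + q.2.2.1 ^ 2) * q.2.2.2.2 + deriv σ q.1 * q.2.1)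
      (fun q => f2 q - σ q.1 / 2 * (q.2.1 ^ 2 + q.2.2.1 ^ 2) * q.2.2.2.1 + deriv σ q.1 * q.2.2.1)
      (fun p => ψ p + σ p.1 / 2 * (p.2.1 ^ 2 + p.2.2 ^ 2)) := by
  obtain ⟨hψ, heq⟩ := h
  have hσ' : ContDiff ℝ (⊤ : ℕ∞) (deriv σ) := by
    have := (contDiff_infty_iff_deriv (f := σ)).1 hσ
    exact this.2
  have hσd : Differentiable ℝ σ := hσ.differentiable (by simp)
  have c1 : ContDiff ℝ (⊤ : ℕ∞) (fun p : V3 => σ p.1) := hσ.comp contDiff_fst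
  have c1' : ContDiff ℝ (⊤ : ℕ∞) (fun p : V3 => deriv σ p.1) := hσ'.comp contDiff_fst
  have cx : ContDiff ℝ (⊤ : ℕ∞) (fun p : V3 => p.2.1) := by fun_prop
  have cy : ContDiff ℝ (⊤ : ℕ∞) (fun p : V3 => p.2.2) := by fun_prop
  have cg : ContDiff ℝ (⊤ : ℕ∞) (fun p : V3 => σ p.1 / 2 * (p.2.1 ^ 2 + p.2.2 ^ 2)) :=
    (c1.div_const 2).mul ((cx.pow 2).add (cy.pow 2))
  have csx : ContDiff ℝ (⊤ : ℕ∞) (fun p : V3 => σ p.1 * p.2.1) := c1.mul cx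
  have csy : ContDiff ℝ (⊤ : ℕ∞) (fun p : V3 => σ p.1 * p.2.2) := c1.mul cy
  have csx' : ContDiff ℝ (⊤ : ℕ∞) (fun p : V3 => deriv σ p.1 * p.2.1) := c1'.mul cx
  have csy' : ContDiff ℝ (⊤ : ℕ∞) (fun p : V3 => deriv σ p.1 * p.2.2) := c1'.mul cy
  have c2 : ContDiff ℝ (⊤ : ℕ∞) (fun p : V3 => 2 * σ p.1) := contDiff_const.mul c1
  have gX : ∀ p : V3, dX (fun p : V3 => σ p.1 / 2 * (p.2.1 ^ 2 + p.2.2 ^ 2)) p = σ p.1 * p.2.1 := by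
    intro p
    apply dX_of (smooth_diff cg p)
    have := (((hasDerivAt_id p.2.1).pow 2).add_const (p.2.2 ^ 2)).const_mul (σ p.1 / 2)
    refine this.congr_deriv ?_
    simp only [id]
    norm_num
    ring
  have gY : ∀ p : V3, dY (fun p : V3 => σ p.1 / 2 * (p.2.1 ^ 2 + p.2.2 ^ 2)) p = σ p.1 * p.2.2 := by
    intro p
    apply dY_of (smooth_diff cg p)
    have := (((hasDerivAt_id p.2.2).pow 2).const_add (p.2.1 ^ 2)).const_mul (σ p.1 / 2)
    refine this.congr_deriv ?_
    simp only [id]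
    norm_num
    ring
  have lX : ∀ (τ : ℝ → ℝ), ContDiff ℝ (⊤ : ℕ∞) (fun p : V3 => τ p.1 * p.2.1) → ∀ p : V3,
      dX (fun p : V3 => τ p.1 * p.2.1) p = τ p.1 := by
    intro τ hτ p
    apply dX_of (smooth_diff hτ p)
    simpa using (hasDerivAt_id p.2.1).const_mul (τ p.1)
  have lY : ∀ (τ : ℝ → ℝ), ContDiff ℝ (⊤ : ℕ∞) (fun p : V3 => τ p.1 * p.2.2) → ∀ p : V3,
      dY (fun p : V3 => τ p.1 * p.2.2) p = τ p.1 := by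
    intro τ hτ p
    apply dY_of (smooth_diff hτ p)
    simpa using (hasDerivAt_id p.2.2).const_mul (τ p.1)
  have sX : ∀ p : V3, dX (fun p : V3 => 2 * σ p.1) p = 0 := fun p =>
    dX_of (smooth_diff c2 p) (hasDerivAt_const _ (2 * σ p.1))
  have sY : ∀ p : V3, dY (fun p : V3 => 2 * σ p.1) p = 0 := fun p =>
    dY_of (smooth_diff c2 p) (hasDerivAt_const _ (2 * σ p.1))
  have sT : ∀ p : V3, dT (fun p : V3 => 2 * σ p.1) p = 2 * deriv σ p.1 := fun p =>
    dT_of (smooth_diff c2 p) ((hσd p.1).hasDerivAt.const_mul 2)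
  have hv : ContDiff ℝ (⊤ : ℕ∞) (vort ψ) :=
    (smooth_dX (smooth_dX hψ)).add (smooth_dY (smooth_dY hψ))
  have hvX := smooth_dX hv
  have hvY := smooth_dY hv
  have pX : dX (fun p => ψ p + σ p.1 / 2 * (p.2.1 ^ 2 + p.2.2 ^ 2))
      = fun p => dX ψ p + σ p.1 * p.2.1 := by
    funext p
    rw [dX_add (smooth_diff hψ p) (smooth_diff cg p), gX]
  have pY : dY (fun p => ψ p + σ p.1 / 2 * (p.2.1 ^ 2 + p.2.2 ^ 2))
      = fun p => dY ψ p + σ p.1 * p.2.2 := by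
    funext p
    rw [dY_add (smooth_diff hψ p) (smooth_diff cg p), gY]
  have pv : vort (fun p => ψ p + σ p.1 / 2 * (p.2.1 ^ 2 + p.2.2 ^ 2))
      = fun p => vort ψ p + 2 * σ p.1 := by
    funext p
    unfold vort
    rw [pX, pY, dX_add (smooth_diff (smooth_dX hψ) p) (smooth_diff csx p),
      dY_add (smooth_diff (smooth_dY hψ) p) (smooth_diff csy p), lX σ csx, lY σ csy]
    ring
  have vX : dX (fun p => vort ψ p + 2 * σ p.1) = dX (vort ψ) := by
    funext p
    rw [dX_add (smooth_diff hv p) (smooth_diff c2 p), sX, add_zero]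
  have vY : dY (fun p => vort ψ p + 2 * σ p.1) = dY (vort ψ) := by
    funext p
    rw [dY_add (smooth_diff hv p) (smooth_diff c2 p), sY, add_zero]
  have hF : ∀ f : V5 → ℝ, ContDiff ℝ (⊤ : ℕ∞) f → ContDiff ℝ (⊤ : ℕ∞) (fcomp f ψ) := by
    intro f hf
    exact hf.comp (contDiff_fst.prodMk (cx.prodMk (cy.prodMk (hvX.prodMk hvY))))
  refine ⟨hψ.add cg, fun p => ?_⟩
  have e1 : fcomp (fun q => f1 q + σ q.1 / 2 * (q.2.1 ^ 2 + q.2.2.1 ^ 2) * q.2.2.2.2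
        + deriv σ q.1 * q.2.1) (fun p => ψ p + σ p.1 / 2 * (p.2.1 ^ 2 + p.2.2 ^ 2))
      = fun p => (fcomp f1 ψ p + (σ p.1 / 2 * (p.2.1 ^ 2 + p.2.2 ^ 2)) * dY (vort ψ) p)
        + deriv σ p.1 * p.2.1 := by
    funext p
    simp only [fcomp, pv, vX, vY]
  have e2 : fcomp (fun q => f2 q - σ q.1 / 2 * (q.2.1 ^ 2 + q.2.2.1 ^ 2) * q.2.2.2.1
        + deriv σ q.1 * q.2.2.1) (fun p => ψ p + σ p.1 / 2 * (p.2.1 ^ 2 + p.2.2 ^ 2))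
      = fun p => (fcomp f2 ψ p - (σ p.1 / 2 * (p.2.1 ^ 2 + p.2.2 ^ 2)) * dX (vort ψ) p)
        + deriv σ p.1 * p.2.2 := by
    funext p
    simp only [fcomp, pv, vX, vY]
  have d1 := smooth_diff (hF f1 hf1) p
  have d2 := smooth_diff (hF f2 hf2) p
  have m1 := smooth_diff (cg.mul hvY) p
  have m2 := smooth_diff (cg.mul hvX) p
  rw [e1, e2, pX, pY, pv, vX, vY, dT_add (smooth_diff hv p) (smooth_diff c2 p), sT,
    dX_add (d1.fun_add m1) (smooth_diff csx' p), dX_add d1 m1,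
    dY_add (d2.fun_sub m2) (smooth_diff csy' p), dY_sub d2 m2,
    dX_mul (smooth_diff cg p) (smooth_diff hvY p),
    dY_mul (smooth_diff cg p) (smooth_diff hvX p), gX, gY, lX _ csx', lY _ csy',
    dX_dY_comm hv]
  linear_combination heq p
end
end

section
/- Let I₁, I₂ : ℝ → ℝ be smooth, let Ω ⊆ ℝ³ be open, and let ψ : Ω → ℝ be a smooth function with ζ := ψ_xx + ψ_yy satisfying ζ_x² + ζ_y² ≠ 0 on Ω and solving ζ_t + ψ_x ζ_y − ψ_y ζ_x = ∂_x[(I₁(t)ζ_x − I₂(t)ζ_y)/(ζ_x² + ζ_y²)] + ∂_y[(I₁(t)ζ_y + I₂(t)ζ_x)/(ζ_x² + ζ_y²)], where ∂_x, ∂_y differentiate the full compositions. Then for every ε ∈ ℝ the following are also smooth solutions of the same equation (on the correspondingly transformed domains): (a) ψ̃(t,x,y) := e^{2ε} ψ(t, e^{−ε}x, e^{−ε}y); (b) ψ̃(t,x,y) := ψ(t, x cos(εt) + y sin(εt), −x sin(εt) + y cos(εt)) + (ε/2)(x² + y²); (c) ψ̃(t,x,y) := ψ(t, x cos ε + y sin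 ε, −x sin ε + y cos ε). -/
/-!
Statement 16: symmetries of the parameterization with
f¹ = P₁ = (I₁(t)ζ_x − I₂(t)ζ_y)/(ζ_x² + ζ_y²), f² = P₂ = (I₁(t)ζ_y + I₂(t)ζ_x)/(ζ_x² + ζ_y²):
scalings, time-dependent rotations and rotations map solutions to solutions.
-/

noncomputable section

/-- The composition (t,x,y) ↦ (I₁(t)ζ_x − I₂(t)ζ_y)/(ζ_x² + ζ_y²). -/
def P1 (I1 I2 : ℝ → ℝ) (ψ : ℝ × ℝ × ℝ → ℝ) : ℝ × ℝ × ℝ → ℝ := fun p =>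
  (I1 p.1 * dX (vort ψ) p - I2 p.1 * dY (vort ψ) p)
    / ((dX (vort ψ) p) ^ 2 + (dY (vort ψ) p) ^ 2)

/-- The composition (t,x,y) ↦ (I₁(t)ζ_y + I₂(t)ζ_x)/(ζ_x² + ζ_y²). -/
def P2 (I1 I2 : ℝ → ℝ) (ψ : ℝ × ℝ × ℝ → ℝ) : ℝ × ℝ × ℝ → ℝ := fun p =>
  (I1 p.1 * dY (vort ψ) p + I2 p.1 * dX (vort ψ) p)
    / ((dX (vort ψ) p) ^ 2 + (dY (vort ψ) p) ^ 2)

/-- ψ is a smooth solution on Ω, with nonvanishing vorticity gradient, of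
ζ_t + ψ_x ζ_y − ψ_y ζ_x = ∂_x P₁ + ∂_y P₂. -/
def IsPSolOn (I1 I2 : ℝ → ℝ) (ψ : ℝ × ℝ × ℝ → ℝ) (Ω : Set (ℝ × ℝ × ℝ)) : Prop :=
  ContDiffOn ℝ (⊤ : ℕ∞) ψ Ω ∧
  (∀ p ∈ Ω, (dX (vort ψ) p) ^ 2 + (dY (vort ψ) p) ^ 2 ≠ 0) ∧
  ∀ p ∈ Ω, dT (vort ψ) p + dX ψ p * dY (vort ψ) p - dY ψ p * dX (vort ψ) p
    = dX (P1 I1 I2 ψ) p + dY (P2 I1 I2 ψ) p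


def rotMap (a b : ℝ → ℝ) (p : ℝ × ℝ × ℝ) : ℝ × ℝ × ℝ :=
  (p.1, p.2.1 * a p.1 + p.2.2 * b p.1, -p.2.1 * b p.1 + p.2.2 * a p.1)

lemma contDiffOn_dir {f : ℝ × ℝ × ℝ → ℝ} {Ω : Set (ℝ × ℝ × ℝ)} (hΩ : IsOpen Ω)
    (hf : ContDiffOn ℝ (⊤ : ℕ∞) f Ω) (v : ℝ × ℝ × ℝ) :
    ContDiffOn ℝ (⊤ : ℕ∞) (fun p => fderiv ℝ f p v) Ω :=
  (hf.fderiv_of_isOpen hΩ (m := (⊤ : ℕ∞)) (by simp)).clm_apply contDiffOn_const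

lemma contDiffOn_vort {f : ℝ × ℝ × ℝ → ℝ} {Ω : Set (ℝ × ℝ × ℝ)} (hΩ : IsOpen Ω)
    (hf : ContDiffOn ℝ (⊤ : ℕ∞) f Ω) : ContDiffOn ℝ (⊤ : ℕ∞) (vort f) Ω :=
  (contDiffOn_dir hΩ (contDiffOn_dir hΩ hf (0, 1, 0)) (0, 1, 0)).add
    (contDiffOn_dir hΩ (contDiffOn_dir hΩ hf (0, 0, 1)) (0, 0, 1))

lemma diffAt_of {f : ℝ × ℝ × ℝ → ℝ} {Ω : Set (ℝ × ℝ × ℝ)} (hΩ : IsOpen Ω)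
    (hf : ContDiffOn ℝ (⊤ : ℕ∞) f Ω) {p : ℝ × ℝ × ℝ} (hp : p ∈ Ω) : DifferentiableAt ℝ f p :=
  (hf.contDiffAt (hΩ.mem_nhds hp)).differentiableAt (by simp)

lemma rot_hasFDerivAt {a b : ℝ → ℝ} {ω : ℝ} (ha : ∀ t, HasDerivAt a (-(ω * b t)) t)
    (hb : ∀ t, HasDerivAt b (ω * a t) t) (p : ℝ × ℝ × ℝ) :
    ∃ L : ℝ × ℝ × ℝ →L[ℝ] ℝ × ℝ × ℝ, HasFDerivAt (rotMap a b) L p ∧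
      L (1, 0, 0) = (1, ω * (rotMap a b p).2.2, -(ω * (rotMap a b p).2.1)) ∧
      L (0, 1, 0) = (0, a p.1, -b p.1) ∧ L (0, 0, 1) = (0, b p.1, a p.1) := by
  have h1 : HasFDerivAt (fun q : ℝ × ℝ × ℝ => q.1) (ContinuousLinearMap.fst ℝ ℝ (ℝ × ℝ)) p :=
    hasFDerivAt_fst
  have h2 : HasFDerivAt (fun q : ℝ × ℝ × ℝ => q.2) (ContinuousLinearMap.snd ℝ ℝ (ℝ × ℝ)) p :=
    hasFDerivAt_snd
  have hx := h2.fst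
  have hy := h2.snd
  have hA := (ha p.1).comp_hasFDerivAt p h1
  have hB := (hb p.1).comp_hasFDerivAt p h1
  refine ⟨_, h1.prodMk (((hx.mul hA).add (hy.mul hB)).prodMk
    ((hx.neg.mul hB).add (hy.mul hA))), ?_, ?_, ?_⟩
  · simp [rotMap]; constructor <;> ring
  · simp
  · simp

lemma lin3 (L : ℝ × ℝ × ℝ →L[ℝ] ℝ) (u v w : ℝ) :
    L (u, v, w) = u * L (1, 0, 0) + v * L (0, 1, 0) + w * L (0, 0, 1) := by
  have : ((u, v, w) : ℝ × ℝ × ℝ) = u • (1, 0, 0) + v • (0, 1, 0) + w • (0, 0, 1) := by simp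
  rw [this]; simp only [map_add, map_smul, smul_eq_mul]

lemma chain {a b : ℝ → ℝ} {ω : ℝ} (ha : ∀ t, HasDerivAt a (-(ω * b t)) t)
    (hb : ∀ t, HasDerivAt b (ω * a t) t) (p : ℝ × ℝ × ℝ) {f : ℝ × ℝ × ℝ → ℝ}
    (hf : DifferentiableAt ℝ f (rotMap a b p)) :
    DifferentiableAt ℝ (fun q => f (rotMap a b q)) p ∧
    dT (fun q => f (rotMap a b q)) p = dT f (rotMap a b p)
      + ω * ((rotMap a b p).2.2 * dX f (rotMap a b p)
        - (rotMap a b p).2.1 * dY f (rotMap a b p)) ∧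
    dX (fun q => f (rotMap a b q)) p
      = a p.1 * dX f (rotMap a b p) - b p.1 * dY f (rotMap a b p) ∧
    dY (fun q => f (rotMap a b q)) p
      = b p.1 * dX f (rotMap a b p) + a p.1 * dY f (rotMap a b p) := by
  obtain ⟨L, hL, e1, e2, e3⟩ := rot_hasFDerivAt ha hb p
  have h := hf.hasFDerivAt.comp p hL
  have h' : fderiv ℝ (fun q => f (rotMap a b q)) p = _ := h.fderiv
  refine ⟨h.differentiableAt, ?_, ?_, ?_⟩
  · simp only [dT, dX, dY, h', ContinuousLinearMap.comp_apply, e1]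
    rw [lin3]; ring
  · simp only [dX, dY, h', ContinuousLinearMap.comp_apply, e2]
    rw [lin3]; ring
  · simp only [dX, dY, h', ContinuousLinearMap.comp_apply, e3]
    rw [lin3]; ring

lemma div_lemma {a b : ℝ → ℝ} {ω : ℝ} (ha : ∀ t, HasDerivAt a (-(ω * b t)) t)
    (hb : ∀ t, HasDerivAt b (ω * a t) t) (k c : ℝ) (hk : ∀ t, k * (a t ^ 2 + b t ^ 2) = 1)
    (p : ℝ × ℝ × ℝ) {u v U V : ℝ × ℝ × ℝ → ℝ}
    (hu : DifferentiableAt ℝ u (rotMap a b p)) (hv : DifferentiableAt ℝ v (rotMap a b p))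
    (hU : U =ᶠ[nhds p] fun q => k * (a q.1 * u (rotMap a b q) - b q.1 * v (rotMap a b q))
      + c * q.2.1)
    (hV : V =ᶠ[nhds p] fun q => k * (b q.1 * u (rotMap a b q) + a q.1 * v (rotMap a b q))
      + c * q.2.2) :
    dX U p + dY V p = dX u (rotMap a b p) + dY v (rotMap a b p) + 2 * c := by
  obtain ⟨du, -, ux, uy⟩ := chain ha hb p hu
  obtain ⟨dv, -, vx, vy⟩ := chain ha hb p hv
  have h1 : HasFDerivAt (fun q : ℝ × ℝ × ℝ => q.1) (ContinuousLinearMap.fst ℝ ℝ (ℝ × ℝ)) p :=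
    hasFDerivAt_fst
  have h2 : HasFDerivAt (fun q : ℝ × ℝ × ℝ => q.2) (ContinuousLinearMap.snd ℝ ℝ (ℝ × ℝ)) p :=
    hasFDerivAt_snd
  have hx := h2.fst
  have hy := h2.snd
  have hA := (ha p.1).comp_hasFDerivAt p h1
  have hB := (hb p.1).comp_hasFDerivAt p h1
  have eU := ((((hA.mul du.hasFDerivAt).sub (hB.mul dv.hasFDerivAt)).const_mul k).add
    (hx.const_mul c))
  have eV := ((((hB.mul du.hasFDerivAt).add (hA.mul dv.hasFDerivAt)).const_mul k).add
    (hy.const_mul c))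
  have eU' := (eU.congr_of_eventuallyEq hU).fderiv
  have eV' := (eV.congr_of_eventuallyEq hV).fderiv
  have hk' := hk p.1
  simp only [dX, dY] at ux uy vx vy ⊢
  rw [eU', eV']
  simp [ux, uy, vx, vy]
  linear_combination (fderiv ℝ u (rotMap a b p) (0, 1, 0)
    + fderiv ℝ v (rotMap a b p) (0, 0, 1)) * hk'

lemma general (I1 I2 : ℝ → ℝ) (hI1 : ContDiff ℝ (⊤ : ℕ∞) I1) (hI2 : ContDiff ℝ (⊤ : ℕ∞) I2)
    (Ω : Set (ℝ × ℝ × ℝ)) (hΩ : IsOpen Ω)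
    (ψ : ℝ × ℝ × ℝ → ℝ) (h : IsPSolOn I1 I2 ψ Ω) {a b : ℝ → ℝ} {ω : ℝ}
    (ha : ∀ t, HasDerivAt a (-(ω * b t)) t)
    (hb : ∀ t, HasDerivAt b (ω * a t) t) (ca : ContDiff ℝ (⊤ : ℕ∞) a)
    (cb : ContDiff ℝ (⊤ : ℕ∞) b) (k : ℝ) (hk : ∀ t, k * (a t ^ 2 + b t ^ 2) = 1) :
    IsPSolOn I1 I2 (fun p => k * ψ (rotMap a b p) + ω / 2 * (p.2.1 ^ 2 + p.2.2 ^ 2))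
      {p | rotMap a b p ∈ Ω} := by
  obtain ⟨hs, hn, he⟩ := h
  have cφ : ContDiff ℝ (⊤ : ℕ∞) (rotMap a b) := by unfold rotMap; fun_prop
  have hΩ' : IsOpen {p | rotMap a b p ∈ Ω} := hΩ.preimage cφ.continuous
  set Ψ : ℝ × ℝ × ℝ → ℝ :=
    fun p => k * ψ (rotMap a b p) + ω / 2 * (p.2.1 ^ 2 + p.2.2 ^ 2) with hΨ
  have cz := contDiffOn_vort hΩ hs
  have czx : ContDiffOn ℝ (⊤ : ℕ∞) (dX (vort ψ)) Ω := contDiffOn_dir hΩ cz _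
  have czy : ContDiffOn ℝ (⊤ : ℕ∞) (dY (vort ψ)) Ω := contDiffOn_dir hΩ cz _
  have cψx : ContDiffOn ℝ (⊤ : ℕ∞) (dX ψ) Ω := contDiffOn_dir hΩ hs _
  have cψy : ContDiffOn ℝ (⊤ : ℕ∞) (dY ψ) Ω := contDiffOn_dir hΩ hs _
  have cI1 : ContDiffOn ℝ (⊤ : ℕ∞) (fun p : ℝ × ℝ × ℝ => I1 p.1) Ω :=
    (hI1.comp contDiff_fst).contDiffOn
  have cI2 : ContDiffOn ℝ (⊤ : ℕ∞) (fun p : ℝ × ℝ × ℝ => I2 p.1) Ω :=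
    (hI2.comp contDiff_fst).contDiffOn
  have cP1 : ContDiffOn ℝ (⊤ : ℕ∞) (P1 I1 I2 ψ) Ω :=
    ((cI1.mul czx).sub (cI2.mul czy)).div ((czx.pow 2).add (czy.pow 2)) hn
  have cP2 : ContDiffOn ℝ (⊤ : ℕ∞) (P2 I1 I2 ψ) Ω :=
    ((cI1.mul czy).add (cI2.mul czx)).div ((czx.pow 2).add (czy.pow 2)) hn
  have cΨ : ContDiffOn ℝ (⊤ : ℕ∞) Ψ {p | rotMap a b p ∈ Ω} :=
    (contDiffOn_const.mul (hs.comp cφ.contDiffOn (fun _ hp => hp))).add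
      (ContDiff.contDiffOn (by fun_prop))
  -- first derivatives
  have D1 : ∀ p, rotMap a b p ∈ Ω →
      dX Ψ p = k * (a p.1 * dX ψ (rotMap a b p) - b p.1 * dY ψ (rotMap a b p)) + ω * p.2.1 ∧
      dY Ψ p = k * (b p.1 * dX ψ (rotMap a b p) + a p.1 * dY ψ (rotMap a b p)) + ω * p.2.2 := by
    intro p hp
    obtain ⟨du, -, ux, uy⟩ := chain ha hb p (diffAt_of hΩ hs hp)
    have h2 : HasFDerivAt (fun q : ℝ × ℝ × ℝ => q.2) (ContinuousLinearMap.snd ℝ ℝ (ℝ × ℝ)) p :=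
      hasFDerivAt_snd
    have e := ((du.hasFDerivAt.const_mul k).add
      (((h2.fst.pow 2).add (h2.snd.pow 2)).const_mul (ω / 2)))
    have e' : fderiv ℝ Ψ p = _ := e.fderiv
    simp only [dX, dY] at ux uy ⊢
    rw [e']
    constructor
    · simp [ux]; ring
    · simp [uy]; ring
  have Vt : ∀ p, rotMap a b p ∈ Ω → vort Ψ p = vort ψ (rotMap a b p) + 2 * ω := by
    intro p hp
    refine div_lemma ha hb k ω hk p (diffAt_of hΩ cψx hp) (diffAt_of hΩ cψy hp) ?_ ?_
    · filter_upwards [hΩ'.mem_nhds hp] with q hq using (D1 q hq).1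
    · filter_upwards [hΩ'.mem_nhds hp] with q hq using (D1 q hq).2
  have D2 : ∀ p, rotMap a b p ∈ Ω →
      dT (vort Ψ) p = dT (vort ψ) (rotMap a b p)
        + ω * ((rotMap a b p).2.2 * dX (vort ψ) (rotMap a b p)
        - (rotMap a b p).2.1 * dY (vort ψ) (rotMap a b p)) ∧
      dX (vort Ψ) p
        = a p.1 * dX (vort ψ) (rotMap a b p) - b p.1 * dY (vort ψ) (rotMap a b p) ∧
      dY (vort Ψ) p
        = b p.1 * dX (vort ψ) (rotMap a b p) + a p.1 * dY (vort ψ) (rotMap a b p) := by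
    intro p hp
    obtain ⟨du, ut, ux, uy⟩ := chain ha hb p (diffAt_of hΩ cz hp)
    have e : vort Ψ =ᶠ[nhds p] fun q => vort ψ (rotMap a b q) + 2 * ω := by
      filter_upwards [hΩ'.mem_nhds hp] with q hq using Vt q hq
    have e' : fderiv ℝ (vort Ψ) p = fderiv ℝ (fun q => vort ψ (rotMap a b q)) p := by
      rw [e.fderiv_eq, fderiv_add_const]
    rw [← ut, ← ux, ← uy]
    simp only [dT, dX, dY, e', and_self]
  have hm : ∀ p, rotMap a b p ∈ Ω → k * ((dX (vort Ψ) p) ^ 2 + (dY (vort Ψ) p) ^ 2)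
      = (dX (vort ψ) (rotMap a b p)) ^ 2 + (dY (vort ψ) (rotMap a b p)) ^ 2 := by
    intro p hp
    obtain ⟨-, hx, hy⟩ := D2 p hp
    rw [hx, hy]
    linear_combination ((dX (vort ψ) (rotMap a b p)) ^ 2
      + (dY (vort ψ) (rotMap a b p)) ^ 2) * hk p.1
  have hne : ∀ p, rotMap a b p ∈ Ω → (dX (vort Ψ) p) ^ 2 + (dY (vort Ψ) p) ^ 2 ≠ 0 := by
    intro p hp h0
    have := hm p hp
    rw [h0, mul_zero] at this
    exact hn _ hp this.symm
  have hk0 : k ≠ 0 := by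
    rintro rfl
    simpa using hk 0
  refine ⟨cΨ, hne, ?_⟩
  intro p hp
  have hdiv : dX (P1 I1 I2 Ψ) p + dY (P2 I1 I2 Ψ) p
      = dX (P1 I1 I2 ψ) (rotMap a b p) + dY (P2 I1 I2 ψ) (rotMap a b p) + 2 * 0 := by
    refine div_lemma ha hb k 0 hk p (diffAt_of hΩ cP1 hp) (diffAt_of hΩ cP2 hp) ?_ ?_
    · filter_upwards [hΩ'.mem_nhds hp] with q hq
      obtain ⟨-, hx, hy⟩ := D2 q hq
      have h1 := hne q hq
      have h2 : (rotMap a b q).1 = q.1 := rfl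
      simp only [P1, P2, ← hm q hq, h2]
      field_simp
      rw [hx, hy]; ring
    · filter_upwards [hΩ'.mem_nhds hp] with q hq
      obtain ⟨-, hx, hy⟩ := D2 q hq
      have h1 := hne q hq
      have h2 : (rotMap a b q).1 = q.1 := rfl
      simp only [P1, P2, ← hm q hq, h2]
      field_simp
      rw [hx, hy]; ring
  obtain ⟨ht, hx, hy⟩ := D2 p hp
  obtain ⟨px, py⟩ := D1 p hp
  rw [hdiv, mul_zero, add_zero, ← he _ hp, ht, hx, hy, px, py]
  have e1 : (rotMap a b p).2.1 = p.2.1 * a p.1 + p.2.2 * b p.1 := rfl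
  have e2 : (rotMap a b p).2.2 = -p.2.1 * b p.1 + p.2.2 * a p.1 := rfl
  rw [e1, e2]
  linear_combination (dX ψ (rotMap a b p) * dY (vort ψ) (rotMap a b p)
    - dY ψ (rotMap a b p) * dX (vort ψ) (rotMap a b p)) * hk p.1

theorem symmetries_of_P_parameterization
    (I1 I2 : ℝ → ℝ) (hI1 : ContDiff ℝ (⊤ : ℕ∞) I1) (hI2 : ContDiff ℝ (⊤ : ℕ∞) I2)
    (Ω : Set (ℝ × ℝ × ℝ)) (hΩ : IsOpen Ω)
    (ψ : ℝ × ℝ × ℝ → ℝ) (h : IsPSolOn I1 I2 ψ Ω) (ε : ℝ) :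
    -- (a) scaling
    IsPSolOn I1 I2
      (fun p => Real.exp (2 * ε) * ψ (p.1, Real.exp (-ε) * p.2.1, Real.exp (-ε) * p.2.2))
      {p : ℝ × ℝ × ℝ | (p.1, Real.exp (-ε) * p.2.1, Real.exp (-ε) * p.2.2) ∈ Ω} ∧
    -- (b) time-dependent rotation
    IsPSolOn I1 I2
      (fun p => ψ (p.1, p.2.1 * Real.cos (ε * p.1) + p.2.2 * Real.sin (ε * p.1),
                   -p.2.1 * Real.sin (ε * p.1) + p.2.2 * Real.cos (ε * p.1))
        + ε / 2 * (p.2.1 ^ 2 + p.2.2 ^ 2))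
      {p : ℝ × ℝ × ℝ | (p.1, p.2.1 * Real.cos (ε * p.1) + p.2.2 * Real.sin (ε * p.1),
                        -p.2.1 * Real.sin (ε * p.1) + p.2.2 * Real.cos (ε * p.1)) ∈ Ω} ∧
    -- (c) rotation
    IsPSolOn I1 I2
      (fun p => ψ (p.1, p.2.1 * Real.cos ε + p.2.2 * Real.sin ε,
                   -p.2.1 * Real.sin ε + p.2.2 * Real.cos ε))
      {p : ℝ × ℝ × ℝ | (p.1, p.2.1 * Real.cos ε + p.2.2 * Real.sin ε,
                        -p.2.1 * Real.sin ε + p.2.2 * Real.cos ε) ∈ Ω} := by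
  refine ⟨?_, ?_, ?_⟩
  · have := general I1 I2 hI1 hI2 Ω hΩ ψ h (a := fun _ => Real.exp (-ε)) (b := fun _ => 0) (ω := 0)
      (fun t => by simpa using hasDerivAt_const t (Real.exp (-ε)))
      (fun t => by simpa using hasDerivAt_const t (0 : ℝ)) contDiff_const contDiff_const
      (Real.exp (2 * ε)) (fun t => by
        rw [← Real.exp_nat_mul, zero_pow two_ne_zero, add_zero, ← Real.exp_add]; simp)
    simpa [rotMap, mul_comm] using this
  · have := general I1 I2 hI1 hI2 Ω hΩ ψ h (a := fun t => Real.cos (ε * t))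
      (b := fun t => Real.sin (ε * t)) (ω := ε)
      (fun t => by
        have := ((hasDerivAt_id t).const_mul ε).cos
        simpa [mul_comm] using this)
      (fun t => by
        have := ((hasDerivAt_id t).const_mul ε).sin
        simpa [mul_comm] using this) (by fun_prop) (by fun_prop)
      1 (fun t => by simp)
    simpa only [rotMap, one_mul] using this
  · have := general I1 I2 hI1 hI2 Ω hΩ ψ h (a := fun _ => Real.cos ε)
      (b := fun _ => Real.sin ε) (ω := 0)
      (fun t => by simpa using hasDerivAt_const t (Real.cos ε))
      (fun t => by simpa using hasDerivAt_const t (Real.sin ε)) contDiff_const contDiff_const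
      1 (fun t => by simp)
    simpa only [rotMap, one_mul, zero_div, zero_mul, add_zero] using this
end
end
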